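/- arXiv:1106.6079 — 2 statements merged into one kernel-verified Lean document; each statement's English description precedes it below -/
import Mathlib

section
/- Assume k is infinite. Then the value semigroup S(O) = {v(z) | z ∈ O∖{0}} is symmetric if and only if O is Gorenstein. (Corollary 3.9) -/
/-- The dimension over `k` of the quotient `A / B` of two `O`-submodules of `K`,
viewed as `k`-vector spaces. -/
noncomputable def qdim (k : Type) {O K : Type} [Field k] [CommRing O] [CommRing K]
    [Algebra k O] [Algebra O K] [Algebra k K] [IsScalarTower k O K]
    (A B : Submodule O K) : ℕ :=
  Module.finrank k
    (↥(Submodule.restrictScalars k A) ⧸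
      (Submodule.comap (Submodule.restrictScalars k A).subtype (Submodule.restrictScalars k B)))

/-- `b` is a fractional ideal of `O` in `K`: a nonzero `O`-submodule of `K` admitting a
regular denominator in `O`. -/
def IsFracIdeal {O K : Type} [CommRing O] [CommRing K] [Algebra O K]
    (b : Submodule O K) : Prop :=
  b ≠ ⊥ ∧ ∃ x ∈ nonZeroDivisors O, ∀ z ∈ b, x • z ∈ (1 : Submodule O K)

/-- The `i`-th component of the value vector `v(a)` of a (fractional) ideal `a`:
the minimum of `v i` over the nonzero elements of `a`. -/
noncomputable def idealVal {O K : Type} [CommRing O] [CommRing K] [Algebra O K] {r : ℕ}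
    (v : Fin r → K → ℤ) (a : Submodule O K) (i : Fin r) : ℤ :=
  sInf {n : ℤ | ∃ z ∈ a, z ≠ 0 ∧ v i z = n}

/-- `γ^b := v(b : Ō) - v(b·Ō)`. -/
noncomputable def gammaB {O K : Type} [CommRing O] [CommRing K] [Algebra O K] {r : ℕ}
    (v : Fin r → K → ℤ) (Obar b : Submodule O K) : Fin r → ℤ :=
  fun i => idealVal v (b / Obar) i - idealVal v (b * Obar) i

/-- `c` is a canonical ideal of `O`: a fractional ideal with `a = c : (c : a)` for every
fractional ideal `a`. -/
def IsCanonicalIdeal {O K : Type} [CommRing O] [CommRing K] [Algebra O K]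
    (c : Submodule O K) : Prop :=
  IsFracIdeal c ∧ ∀ a : Submodule O K, IsFracIdeal a → a = c / (c / a)

/-- `b` is self-dual: `b = c : b` for some canonical ideal `c`. -/
def IsSelfDual {O K : Type} [CommRing O] [CommRing K] [Algebra O K]
    (b : Submodule O K) : Prop :=
  ∃ c : Submodule O K, IsCanonicalIdeal c ∧ b = c / b

/-- The value set `S(b) = { v(z) - v(b·Ō) | z ∈ b \ {0} }`. -/
def Sset {O K : Type} [CommRing O] [CommRing K] [Algebra O K] {r : ℕ}
    (v : Fin r → K → ℤ) (Obar b : Submodule O K) : Set (Fin r → ℤ) :=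
  {w | ∃ z ∈ b, z ≠ 0 ∧ w = fun i => v i z - idealVal v (b * Obar) i}

/-- `Δ(n) = Δ_1(n) ∪ ⋯ ∪ Δ_r(n)` for a subset `S ⊆ ℤ^r`. -/
def Delta {r : ℕ} (S : Set (Fin r → ℤ)) (n : Fin r → ℤ) : Set (Fin r → ℤ) :=
  {σ | σ ∈ S ∧ ∃ i, σ i = n i ∧ ∀ j, j ≠ i → n j < σ j}

/-- `S ⊆ ℤ^r` is symmetric if there is `τ` with `w ∈ S ↔ Δ(τ - w) = ∅` for all `w`. -/
def IsSymmetricSet {r : ℕ} (S : Set (Fin r → ℤ)) : Prop :=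
  ∃ τ : Fin r → ℤ, ∀ w : Fin r → ℤ, w ∈ S ↔ Delta S (τ - w) = ∅

/-!
For a value vector `n` let `ball n` be the elements of `K` with value vector at least `n`, and let
`e i` be the `i`-th unit vector. Residual rationality says that `ball (n + e i)` has codimension one
in `ball n`. Hence a functional `φ` on `K` that vanishes on `ball γ`, but on none of the larger
`ball (γ - e i)`, makes the pairing `(x, y) ↦ φ (x * y)` perfect on fractional ideals: `aᗮᗮ = a`.
Moreover `aᗮ = Oᗮ : a`, so `O : (O : a) = a` for every `a` as soon as `Oᗮ = O`.

If `S(O)` is symmetric about `γ - 1`, then `O` contains `ball γ` and has no element of level exactly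
`γ - e i`, so `φ` can be chosen to vanish on `O`. Then `O ≤ Oᗮ`, and symmetry forces every value
vector of `Oᗮ` to occur in `O`, whence `Oᗮ = O`. Here `k` must be large enough for a `k`-space not
to be covered by `r` proper subspaces.

Conversely, `O : ball n = ball (γ - n)` for some `γ`. An element of `O` of value vector `w` excludes
`Δ(γ - 1 - w)`, since a product would have level exactly `γ - e i`. If an element of level `w` at
`i` is missing, duality for `O + ball (γ - w)` produces an element of `Δ_i(γ - 1 - w)`.
-/

theorem exists_mem_forall_notMem_of_card_lt {k V ι : Type*} [Field k] [AddCommGroup V] [Module k V]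
    [Finite ι] (hk : ENat.card ι < ENat.card k) {W : Submodule k V} {p : ι → Submodule k V}
    (hp : ∀ i, ¬W ≤ p i) : ∃ z ∈ W, ∀ i, z ∉ p i := by
  cases nonempty_fintype ι
  have hcover := Submodule.iUnion_ssubset_of_forall_ne_top_of_card_lt Finset.univ
    (fun i => (p i).comap W.subtype) (fun i => Submodule.comap_subtype_eq_top.not.2 (hp i))
    (by simpa using hk)
  obtain ⟨⟨z, hzW⟩, hz⟩ := (Set.ne_univ_iff_exists_notMem _).1 hcover.ne
  exact ⟨z, hzW, by simpa using hz⟩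

theorem exists_le_ker_forall_ne_zero_of_card_lt {k V ι : Type*} [Field k] [AddCommGroup V]
    [Module k V] [Finite ι] (hk : ENat.card ι < ENat.card k) {W : Submodule k V} {t : ι → V}
    (ht : ∀ i, t i ∉ W) : ∃ φ : V →ₗ[k] k, W ≤ LinearMap.ker φ ∧ ∀ i, φ (t i) ≠ 0 := by
  obtain ⟨φ, hφW, hφt⟩ := exists_mem_forall_notMem_of_card_lt hk (W := W.dualAnnihilator)
    (p := fun i => LinearMap.ker (Module.Dual.eval k V (t i))) fun i hle => by
      obtain ⟨f, hft, hfW⟩ := Submodule.exists_le_ker_of_notMem (ht i)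
      exact hft (hle ((Submodule.mem_dualAnnihilator f).2 hfW))
  exact ⟨φ, (Submodule.mem_dualAnnihilator φ).1 hφW, hφt⟩

section IntegerVectors

variable {ι : Type*} [DecidableEq ι] {m n : ι → ℤ} {i : ι}

theorem add_single_le_iff {a : ℤ} :
    n + Pi.single i a ≤ m ↔ n i + a ≤ m i ∧ ∀ j, j ≠ i → n j ≤ m j := by
  refine ⟨fun h => ⟨by simpa using h i, fun j hj => by simpa [hj] using h j⟩, fun h j => ?_⟩
  obtain rfl | hj := eq_or_ne j i
  · simpa using h.1
  · simpa [hj] using h.2 j hj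

theorem sub_single_le_iff {a : ℤ} :
    n - Pi.single i a ≤ m ↔ n i - a ≤ m i ∧ ∀ j, j ≠ i → n j ≤ m j := by
  rw [sub_eq_add_neg, ← Pi.single_neg, add_single_le_iff, sub_eq_add_neg]

theorem descending_induction [Finite ι] {P : (ι → ℤ) → Prop} {N : ι → ℤ}
    (base : ∀ n, N ≤ n → P n) (step : ∀ n i, n i < N i → P (n + Pi.single i 1) → P n)
    (n : ι → ℤ) : P n := by
  cases nonempty_fintype ι
  induction hm : ∑ i, (N i - n i).toNat using Nat.strong_induction_on generalizing n with
  | _ m ih =>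
    by_cases hn : N ≤ n
    · exact base n hn
    obtain ⟨i, hi⟩ : ∃ i, n i < N i := by simpa [Pi.le_def] using hn
    refine step n i hi (ih _ ?_ _ rfl)
    rw [← hm]
    refine Finset.sum_lt_sum (fun j _ => ?_) ⟨i, Finset.mem_univ i, by simp; omega⟩
    obtain rfl | hj := eq_or_ne j i
    · simp; omega
    · simp [hj]

end IntegerVectors

section MapMul

variable {K : Type*} [Field K] {f : K → ℤ}
  (hf : ∀ x y : K, x ≠ 0 → y ≠ 0 → f (x * y) = f x + f y)
include hf

theorem map_one_of_map_mul : f 1 = 0 := by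
  have h11 := hf 1 1 one_ne_zero one_ne_zero
  rw [mul_one] at h11
  omega

theorem map_inv_of_map_mul {x : K} (hx : x ≠ 0) : f x⁻¹ = -f x := by
  have hxx := hf x x⁻¹ hx (inv_ne_zero hx)
  rw [mul_inv_cancel₀ hx, map_one_of_map_mul hf] at hxx
  omega

theorem map_pow_of_map_mul {x : K} (hx : x ≠ 0) (m : ℕ) : f (x ^ m) = m * f x := by
  induction m with
  | zero => simp [map_one_of_map_mul hf]
  | succ m ih =>
    rw [pow_succ, hf _ _ (pow_ne_zero m hx) hx, ih]
    push_cast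
    ring

end MapMul

section Orthogonal

variable {k O K : Type*} [Field k] [CommRing O] [CommRing K] [Algebra O K] [Algebra k K]

/-- The orthogonal complement of `a` under the pairing `(x, y) ↦ φ (x * y)` on `K`. -/
def orthogonal (φ : K →ₗ[k] k) (a : Submodule O K) : Submodule O K where
  carrier := {x | ∀ y ∈ a, φ (x * y) = 0}
  zero_mem' y _ := by rw [zero_mul, map_zero]
  add_mem' hx₁ hx₂ y hy := by rw [add_mul, map_add, hx₁ y hy, hx₂ y hy, add_zero]
  smul_mem' o x hx y hy := by
    rw [smul_mul_assoc, ← mul_smul_comm]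
    exact hx _ (a.smul_mem o hy)

theorem mem_orthogonal {φ : K →ₗ[k] k} {a : Submodule O K} {x : K} :
    x ∈ orthogonal φ a ↔ ∀ y ∈ a, φ (x * y) = 0 :=
  Iff.rfl

theorem orthogonal_eq_div (φ : K →ₗ[k] k) (a : Submodule O K) :
    orthogonal φ a = orthogonal φ 1 / a := by
  ext x
  simp only [Submodule.mem_div_iff_forall_mul_mem, mem_orthogonal]
  refine ⟨fun hx y hy o ho => ?_, fun hx y hy => ?_⟩
  · obtain ⟨o, rfl⟩ := Submodule.mem_one.1 ho
    rw [mul_assoc, mul_comm y, ← Algebra.smul_def]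
    exact hx _ (a.smul_mem o hy)
  · simpa using hx y hy 1 (Submodule.one_le.1 le_rfl)

end Orthogonal

/-- The set of value vectors of the nonzero elements of `W`; it is `S(O)` when `W = O`. -/
def valueSet {k K ι : Type*} [Field k] [Field K] [Algebra k K] (v : ι → K → ℤ)
    (W : Submodule k K) : Set (ι → ℤ) :=
  {w | ∃ z : K, z ∈ W ∧ z ≠ 0 ∧ w = fun i => v i z}

/-- A family of independent discrete valuations on `K`, trivial on `k` and with residue fields
equal to `k`; the value `v i 0` is junk. The field `residue` says that every unit of the `i`-th
valuation ring is congruent to a constant, and `approx` is a weak form of the approximation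
theorem. -/
structure IsRationalValuationFamily (k : Type*) {K ι : Type*} [Field k] [Field K] [Algebra k K]
    (v : ι → K → ℤ) : Prop where
  mul : ∀ (i : ι) (x y : K), x ≠ 0 → y ≠ 0 → v i (x * y) = v i x + v i y
  add : ∀ (i : ι) (x y : K), x ≠ 0 → y ≠ 0 → x + y ≠ 0 → min (v i x) (v i y) ≤ v i (x + y)
  const : ∀ (i : ι) (c : k), c ≠ 0 → v i (algebraMap k K c) = 0
  residue : ∀ (i : ι) (x : K), x ≠ 0 → v i x = 0 →
    ∃ c : k, x - algebraMap k K c ≠ 0 → 0 < v i (x - algebraMap k K c)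
  approx : ∀ (i : ι) (n : ι → ℤ), ∃ x : K, x ≠ 0 ∧ v i x = n i ∧ ∀ j, n j ≤ v j x

namespace IsRationalValuationFamily

section Ball

variable {k K ι : Type*} [Field k] [Field K] [Algebra k K] {v : ι → K → ℤ}

/-- The elements of `K` with value vector at least `n`: the fractional ideals of the intersection
`ball 0` of the valuation rings, viewed as `k`-subspaces. -/
def ball (h : IsRationalValuationFamily k v) (n : ι → ℤ) : Submodule k K where
  carrier := {x | x ≠ 0 → ∀ i, n i ≤ v i x}
  zero_mem' h0 := absurd rfl h0
  add_mem' {x y} hx hy hxy i := by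
    obtain rfl | hx0 := eq_or_ne x 0
    · rw [zero_add] at hxy ⊢
      exact hy hxy i
    obtain rfl | hy0 := eq_or_ne y 0
    · rw [add_zero] at hxy ⊢
      exact hx hxy i
    exact (le_min (hx hx0 i) (hy hy0 i)).trans (h.add i x y hx0 hy0 hxy)
  smul_mem' c x hx hcx i := by
    have hc : c ≠ 0 := (smul_ne_zero_iff.1 hcx).1
    have hx0 : x ≠ 0 := (smul_ne_zero_iff.1 hcx).2
    rw [Algebra.smul_def, h.mul i _ _ (by simpa using hc) hx0, h.const i c hc, zero_add]
    exact hx hx0 i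

variable (h : IsRationalValuationFamily k v) {m n : ι → ℤ} {x y : K}

theorem ball_anti (hmn : m ≤ n) : h.ball n ≤ h.ball m :=
  fun _ hx hx0 i => (hmn i).trans (hx hx0 i)

theorem one_mem_ball_zero : (1 : K) ∈ h.ball 0 :=
  fun _ i => (map_one_of_map_mul (h.mul i)).ge

theorem mul_mem_ball (hx : x ∈ h.ball m) (hy : y ∈ h.ball n) : x * y ∈ h.ball (m + n) := by
  intro hxy i
  have hx0 := left_ne_zero_of_mul hxy
  have hy0 := right_ne_zero_of_mul hxy
  rw [h.mul i x y hx0 hy0]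
  exact add_le_add (hx hx0 i) (hy hy0 i)

theorem mul_mem_ball_iff (hx : x ≠ 0) :
    x * y ∈ h.ball n ↔ y ∈ h.ball (n - fun i => v i x) := by
  refine ⟨fun hxy => ?_, fun hy => ?_⟩
  · have hx' : x⁻¹ ∈ h.ball (-fun i => v i x) := fun _ i => (map_inv_of_map_mul (h.mul i) hx).ge
    simpa [hx, sub_eq_neg_add] using h.mul_mem_ball hx' hxy
  · have hx' : x ∈ h.ball (fun i => v i x) := fun _ _ => le_rfl
    simpa using h.mul_mem_ball hx' hy

theorem inv_mul_mem_ball_iff (hx : x ≠ 0) :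
    x⁻¹ * y ∈ h.ball n ↔ y ∈ h.ball (n + fun i => v i x) := by
  have hinv : (fun i => v i x⁻¹) = -fun i => v i x :=
    funext fun i => map_inv_of_map_mul (h.mul i) hx
  rw [h.mul_mem_ball_iff (inv_ne_zero hx), hinv, sub_neg_eq_add]

section DecidableEq

variable [DecidableEq ι] {i : ι}

theorem notMem_ball_add_single_iff (hx : x ∈ h.ball n) :
    x ∉ h.ball (n + Pi.single i 1) ↔ x ≠ 0 ∧ v i x = n i := by
  refine ⟨fun hx' => ?_, fun ⟨hx0, hxi⟩ hx' => ?_⟩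
  · have hx0 : x ≠ 0 := by
      rintro rfl
      exact hx' (zero_mem _)
    refine ⟨hx0, le_antisymm (not_lt.1 fun hlt => hx' fun _ => ?_) (hx hx0 i)⟩
    exact add_single_le_iff.2 ⟨hlt, fun j _ => hx hx0 j⟩
  · exact (Int.lt_of_add_one_le (add_single_le_iff.1 (hx' hx0)).1).ne' hxi

theorem exists_mem_ball_notMem (n : ι → ℤ) (i : ι) :
    ∃ x ∈ h.ball n, x ∉ h.ball (n + Pi.single i 1) := by
  obtain ⟨x, hx0, hxi, hx⟩ := h.approx i n
  have hxn : x ∈ h.ball n := fun _ => hx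
  exact ⟨x, hxn, (h.notMem_ball_add_single_iff hxn).2 ⟨hx0, hxi⟩⟩

theorem mul_notMem_ball (hx : x ∈ h.ball m) (hx' : x ∉ h.ball (m + Pi.single i 1))
    (hy : y ∈ h.ball n) (hy' : y ∉ h.ball (n + Pi.single i 1)) :
    x * y ∉ h.ball (m + n + Pi.single i 1) := by
  obtain ⟨hx0, hxi⟩ := (h.notMem_ball_add_single_iff hx).1 hx'
  obtain ⟨hy0, hyi⟩ := (h.notMem_ball_add_single_iff hy).1 hy'
  refine (h.notMem_ball_add_single_iff (h.mul_mem_ball hx hy)).2 ⟨mul_ne_zero hx0 hy0, ?_⟩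
  rw [h.mul i x y hx0 hy0, hxi, hyi, Pi.add_apply]

theorem exists_sub_smul_mem_ball (hx : x ∈ h.ball n) (hy : y ∈ h.ball n)
    (hy' : y ∉ h.ball (n + Pi.single i 1)) : ∃ c : k, x - c • y ∈ h.ball (n + Pi.single i 1) := by
  by_cases hx' : x ∈ h.ball (n + Pi.single i 1)
  · exact ⟨0, by simpa using hx'⟩
  obtain ⟨hx0, hxi⟩ := (h.notMem_ball_add_single_iff hx).1 hx'
  obtain ⟨hy0, hyi⟩ := (h.notMem_ball_add_single_iff hy).1 hy'
  have hquot : v i (x * y⁻¹) = 0 := by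
    rw [h.mul i _ _ hx0 (inv_ne_zero hy0), map_inv_of_map_mul (h.mul i) hy0, hxi, hyi,
      add_neg_cancel]
  obtain ⟨c, hc⟩ := h.residue i (x * y⁻¹) (mul_ne_zero hx0 (inv_ne_zero hy0)) hquot
  have hfactor : x - c • y = (x * y⁻¹ - algebraMap k K c) * y := by
    rw [Algebra.smul_def]
    field_simp
  refine ⟨c, by_contra fun hxy => ?_⟩
  obtain ⟨hxy0, hxyi⟩ := (h.notMem_ball_add_single_iff
    (sub_mem hx ((h.ball n).smul_mem c hy))).1 hxy
  rw [hfactor] at hxy0 hxyi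
  have hc0 := left_ne_zero_of_mul hxy0
  rw [h.mul i _ _ hc0 hy0] at hxyi
  have := hc hc0
  omega

theorem ball_le_of_mem {W : Submodule k K} (hW : h.ball (n + Pi.single i 1) ≤ W)
    (hy : y ∈ h.ball n) (hy' : y ∉ h.ball (n + Pi.single i 1)) (hyW : y ∈ W) : h.ball n ≤ W := by
  intro x hx
  obtain ⟨c, hc⟩ := h.exists_sub_smul_mem_ball hx hy hy'
  simpa using add_mem (hW hc) (W.smul_mem c hyW)

theorem mem_valueSet_iff [Finite ι] [Nonempty ι] (hk : ENat.card ι < ENat.card k)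
    {W : Submodule k K} {w : ι → ℤ} :
    w ∈ valueSet v W ↔ ∀ i, ¬W ⊓ h.ball w ≤ h.ball (w + Pi.single i 1) := by
  refine ⟨?_, fun hW => ?_⟩
  · rintro ⟨z, hzW, hz0, rfl⟩ i hle
    have hz : z ∈ h.ball (fun i => v i z) := fun _ _ => le_rfl
    exact (h.notMem_ball_add_single_iff hz).2 ⟨hz0, rfl⟩ (hle ⟨hzW, hz⟩)
  · obtain ⟨z, ⟨hzW, hzw⟩, hz⟩ := exists_mem_forall_notMem_of_card_lt hk hW
    have hz' i := (h.notMem_ball_add_single_iff hzw).1 (hz i)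
    exact ⟨z, hzW, (hz' (Classical.arbitrary ι)).1, funext fun i => (hz' i).2.symm⟩

end DecidableEq

theorem le_of_valueSet_subset [Finite ι] {B W : Submodule k K} {N q : ι → ℤ} (hB : h.ball N ≤ B)
    (hW : W ≤ h.ball q) (hval : valueSet v W ⊆ valueSet v (B ⊓ W)) : W ≤ B := by
  classical
  suffices hball : W ⊓ h.ball q ≤ B from (le_inf le_rfl hW).trans hball
  refine descending_induction (P := fun n => W ⊓ h.ball n ≤ B) (N := N)
    (fun n hn => inf_le_right.trans ((h.ball_anti hn).trans hB)) (fun n i _ ih => ?_) q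
  rintro x ⟨hxW, hxn⟩
  by_cases hx' : x ∈ h.ball (n + Pi.single i 1)
  · exact ih ⟨hxW, hx'⟩
  obtain ⟨hx0, hxi⟩ := (h.notMem_ball_add_single_iff hxn).1 hx'
  obtain ⟨b, ⟨hbB, hbW⟩, hb0, hbx⟩ := hval ⟨x, hxW, hx0, rfl⟩
  have hbn : b ∈ h.ball n := fun _ j => (hxn hx0 j).trans_eq (congrFun hbx j)
  obtain ⟨c, hc⟩ := h.exists_sub_smul_mem_ball hxn hbn
    ((h.notMem_ball_add_single_iff hbn).2 ⟨hb0, (congrFun hbx i).symm.trans hxi⟩)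
  simpa using add_mem (ih ⟨sub_mem hxW (W.smul_mem c hbW), hc⟩) (B.smul_mem c hbB)

include h in
theorem exists_forall_val_eq [Finite ι] [Nonempty ι] (hk : ENat.card ι < ENat.card k)
    (n : ι → ℤ) : ∃ z : K, z ≠ 0 ∧ ∀ i, v i z = n i := by
  classical
  obtain ⟨z, -, hz0, hz⟩ := (h.mem_valueSet_iff hk (W := ⊤)).2 fun i hle => by
    obtain ⟨x, hx, hx'⟩ := h.exists_mem_ball_notMem n i
    exact hx' (hle ⟨trivial, hx⟩)
  exact ⟨z, hz0, fun i => (congrFun hz i).symm⟩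

theorem exists_eq_ball [Finite ι] [Nonempty ι] (hk : ENat.card ι < ENat.card k)
    {W : Submodule k K} (hne : W ≠ ⊥) {q : ι → ℤ} (hq : W ≤ h.ball q)
    (hmul : ∀ x ∈ W, ∀ y ∈ h.ball 0, x * y ∈ W) : ∃ γ, W = h.ball γ := by
  classical
  obtain ⟨x₀, hx₀W, hx₀⟩ := W.exists_mem_ne_zero_of_ne_bot hne
  have hmin i : ∃ m : ℤ, (∃ z ∈ W, z ≠ 0 ∧ v i z = m) ∧
      ∀ m', (∃ z ∈ W, z ≠ 0 ∧ v i z = m') → m ≤ m' := by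
    refine Int.exists_least_of_bdd ⟨q i, ?_⟩ ⟨_, x₀, hx₀W, hx₀, rfl⟩
    rintro _ ⟨z, hz, hz0, rfl⟩
    exact hq hz hz0 i
  choose γ hγ hγmin using hmin
  have hWγ : W ≤ h.ball γ := fun x hx hx0 i => hγmin i _ ⟨x, hx, hx0, rfl⟩
  obtain ⟨z, hzW, hz0, hz⟩ := (h.mem_valueSet_iff hk (W := W) (w := γ)).2 fun i hle => by
    obtain ⟨z, hzW, hz0, hzi⟩ := hγ i
    exact (h.notMem_ball_add_single_iff (hWγ hzW)).2 ⟨hz0, hzi⟩ (hle ⟨hzW, hWγ hzW⟩)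
  refine ⟨γ, le_antisymm hWγ fun x hx => ?_⟩
  have hxz : z⁻¹ * x ∈ h.ball 0 := (h.inv_mul_mem_ball_iff hz0).2 (by rwa [zero_add, ← hz])
  simpa [hz0] using hmul z hzW _ hxz

end Ball

section Dualizing

variable {k K ι : Type*} [Field k] [Field K] [Algebra k K] [DecidableEq ι] {v : ι → K → ℤ}

/-- A functional on `K` that is exactly of level `γ`: it vanishes on `ball γ`, but on none of the
larger balls `ball (γ - e i)`. The pairing `(x, y) ↦ φ (x * y)` is then perfect in the sense that
`orthogonal φ` is an involution on fractional ideals. -/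
structure IsDualizing (h : IsRationalValuationFamily k v) (γ : ι → ℤ) (φ : K →ₗ[k] k) : Prop where
  ball_le_ker : h.ball γ ≤ LinearMap.ker φ
  ball_sub_single_inf_ker_le : ∀ i, h.ball (γ - Pi.single i 1) ⊓ LinearMap.ker φ ≤ h.ball γ

variable {h : IsRationalValuationFamily k v} {γ : ι → ℤ} {φ : K →ₗ[k] k}

theorem exists_isDualizing [Finite ι] (hk : ENat.card ι < ENat.card k) {W : Submodule k K}
    (hW : h.ball γ ≤ W) (hγ : ∀ i, W ⊓ h.ball (γ - Pi.single i 1) ≤ h.ball γ) :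
    ∃ φ, h.IsDualizing γ φ ∧ W ≤ LinearMap.ker φ := by
  have hgap i : ∃ t ∈ h.ball (γ - Pi.single i 1), t ∉ h.ball γ := by
    have := h.exists_mem_ball_notMem (γ - Pi.single i 1) i
    rwa [sub_add_cancel] at this
  choose t ht ht' using hgap
  obtain ⟨φ, hWφ, hφ⟩ := exists_le_ker_forall_ne_zero_of_card_lt hk
    (fun i htW => ht' i (hγ i ⟨htW, ht i⟩) : ∀ i, t i ∉ W)
  refine ⟨φ, ⟨hW.trans hWφ, fun i x hx => by_contra fun hx' => hφ i ?_⟩, hWφ⟩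
  have hball : h.ball (γ - Pi.single i 1) ≤ LinearMap.ker φ :=
    h.ball_le_of_mem (i := i) (by simpa using hW.trans hWφ) hx.1 (by simpa using hx') hx.2
  exact hball (ht i)

namespace IsDualizing

variable (hφ : h.IsDualizing γ φ) {m p q : ι → ℤ}
include hφ

theorem map_ne_zero {i : ι} {x : K} (hx : x ∈ h.ball (γ - Pi.single i 1)) (hx' : x ∉ h.ball γ) :
    φ x ≠ 0 :=
  fun h0 => hx' (hφ.ball_sub_single_inf_ker_le i ⟨hx, h0⟩)

theorem le_of_ball_le_ker (hm : h.ball m ≤ LinearMap.ker φ) : γ ≤ m := by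
  intro i
  by_contra! hlt
  obtain ⟨x, hx, hx'⟩ := h.exists_mem_ball_notMem ((γ - Pi.single i 1) ⊔ m) i
  obtain ⟨hx0, hxi⟩ := (h.notMem_ball_add_single_iff hx).1 hx'
  have hxγ : x ∈ h.ball γ := hφ.ball_sub_single_inf_ker_le i
    ⟨h.ball_anti le_sup_left hx, hm (h.ball_anti le_sup_right hx)⟩
  have := hxγ hx0 i
  simp only [Pi.sup_apply, Pi.sub_apply, Pi.single_eq_same] at hxi
  grind

-- The values of a functional are matched one ball at a time: passing from `ball (n + e i)` to
-- `ball n` adds one dimension, hence one condition, met by adding to `x` a multiple of an element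
-- of exact level `γ - n - e i`.
theorem exists_forall_mem_ball_map_eq [Finite ι] {ψ : K →ₗ[k] k}
    (hψ : h.ball p ≤ LinearMap.ker ψ) (n : ι → ℤ) : ∃ x, ∀ y ∈ h.ball n, ψ y = φ (x * y) := by
  refine descending_induction (P := fun n => ∃ x, ∀ y ∈ h.ball n, ψ y = φ (x * y)) (N := p)
    (fun n hn => ⟨0, fun y hy => by simpa using hψ (h.ball_anti hn hy)⟩) ?_ n
  rintro n i - ⟨x, hx⟩
  obtain ⟨y, hy, hy'⟩ := h.exists_mem_ball_notMem n i
  obtain ⟨u, hu, hu'⟩ := h.exists_mem_ball_notMem (γ - Pi.single i 1 - n) i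
  have huy : φ (u * y) ≠ 0 := hφ.map_ne_zero (i := i) (by simpa using h.mul_mem_ball hu hy)
    (by simpa using h.mul_notMem_ball hu hu' hy hy')
  have hu_ball z (hz : z ∈ h.ball (n + Pi.single i 1)) : φ (u * z) = 0 :=
    hφ.ball_le_ker (by simpa [sub_sub, add_comm] using h.mul_mem_ball hu hz)
  set c := (ψ y - φ (x * y)) / φ (u * y) with hc
  have hle : h.ball n ≤ LinearMap.ker (ψ - φ ∘ₗ LinearMap.mulLeft k (x + c • u)) := by
    refine h.ball_le_of_mem (fun z hz => ?_) hy hy' ?_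
    · simp [add_mul, hx z hz, hu_ball z hz]
    · simp [add_mul, hc, huy]
  exact ⟨x + c • u, fun z hz => sub_eq_zero.1 (hle hz)⟩

variable {O : Type*} [CommRing O] [Algebra k O] [Algebra O K] [IsScalarTower k O K]
  {a : Submodule O K}

theorem orthogonal_le_ball (hp : h.ball p ≤ a.restrictScalars k) :
    (orthogonal φ a).restrictScalars k ≤ h.ball (γ - p) := by
  intro x hx hx0
  suffices hker : h.ball (p + fun i => v i x) ≤ LinearMap.ker φ from
    sub_le_iff_le_add'.2 (hφ.le_of_ball_le_ker hker)
  intro y hy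
  simpa [hx0] using hx _ (hp ((h.inv_mul_mem_ball_iff hx0).2 hy))

theorem orthogonal_orthogonal [Finite ι] (hp : h.ball p ≤ a.restrictScalars k)
    (hq : a.restrictScalars k ≤ h.ball q) : orthogonal φ (orthogonal φ a) = a := by
  refine le_antisymm (fun x hx => by_contra fun hxa => ?_) fun x hx y hy => ?_
  · obtain ⟨ψ, hψx, hψ⟩ := Submodule.exists_le_ker_of_notMem (p := a.restrictScalars k) hxa
    obtain ⟨z, hz⟩ := hφ.exists_forall_mem_ball_map_eq (hp.trans hψ) (q ⊓ fun i => v i x)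
    have hza : z ∈ orthogonal φ a := fun y hy =>
      (hz y (h.ball_anti inf_le_left (hq hy))).symm.trans (hψ hy)
    have hxz := hz x fun _ _ => min_le_right _ _
    exact hψx (hxz.trans (by rw [mul_comm]; exact hx z hza))
  · rw [mul_comm]
    exact hy x hx

end IsDualizing

end Dualizing

/-- The symmetry of the value set of `W`, read off the traces of the balls on `W`. For `r`
valuations, `γ` corresponds to `τ + 1` in `IsSymmetricSet`. -/
def IsSymmetricAbout {k K ι : Type*} [Field k] [Field K] [Algebra k K] [DecidableEq ι]
    {v : ι → K → ℤ} (h : IsRationalValuationFamily k v) (W : Submodule k K) (γ : ι → ℤ) : Prop :=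
  ∀ w, w ∈ valueSet v W ↔ ∀ i, W ⊓ h.ball (γ - w - Pi.single i 1) ≤ h.ball (γ - w)

section Delta

variable {k K : Type*} [Field k] [Field K] [Algebra k K] {r : ℕ} {v : Fin r → K → ℤ}
  (h : IsRationalValuationFamily k v) {W : Submodule k K}

theorem delta_valueSet_eq_empty_iff {n : Fin r → ℤ} :
    Delta (valueSet v W) n = ∅ ↔
      ∀ i, W ⊓ h.ball (n + 1 - Pi.single i 1) ≤ h.ball (n + 1) := by
  rw [Set.eq_empty_iff_forall_notMem]
  refine ⟨fun hΔ i z ⟨hzW, hz⟩ => by_contra fun hz' => ?_, ?_⟩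
  · have hz'' : z ∉ h.ball (n + 1 - Pi.single i 1 + Pi.single i 1) := by rwa [sub_add_cancel]
    obtain ⟨hz0, hzi⟩ := (h.notMem_ball_add_single_iff hz).1 hz''
    refine hΔ _ ⟨⟨z, hzW, hz0, rfl⟩, i, by simpa using hzi, fun j hj => ?_⟩
    exact (sub_single_le_iff.1 (hz hz0)).2 j hj
  · rintro hn _ ⟨⟨z, hzW, hz0, rfl⟩, i, hzi, hzj⟩
    have hz : z ∈ h.ball (n + 1 - Pi.single i 1) := fun _ =>
      sub_single_le_iff.2 ⟨by simpa using hzi.ge, hzj⟩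
    exact (hn i ⟨hzW, hz⟩ hz0 i).not_gt (by simp [hzi])

theorem isSymmetricSet_valueSet_iff :
    IsSymmetricSet (valueSet v W) ↔ ∃ γ, h.IsSymmetricAbout W γ := by
  refine (Equiv.addRight (1 : Fin r → ℤ)).exists_congr fun τ => forall_congr' fun w => ?_
  rw [h.delta_valueSet_eq_empty_iff, Equiv.coe_addRight, sub_add_eq_add_sub]

end Delta

section Order

/-- `O` behaves as an order in the intersection `ball 0` of the valuation rings: its image in `K`
is contained in `ball 0` and contains some ball. -/
structure IsOrder {k K ι : Type*} [Field k] [Field K] [Algebra k K] {v : ι → K → ℤ}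
    (h : IsRationalValuationFamily k v) (O : Type*) [CommRing O] [Algebra k O] [Algebra O K]
    [IsScalarTower k O K] : Prop where
  one_le_ball : (1 : Submodule O K).restrictScalars k ≤ h.ball 0
  exists_ball_le : ∃ N, h.ball N ≤ (1 : Submodule O K).restrictScalars k

namespace IsOrder

section

variable {k K ι : Type*} [Field k] [Field K] [Algebra k K] {v : ι → K → ℤ}
  {h : IsRationalValuationFamily k v} {O : Type*} [CommRing O] [Algebra k O] [Algebra O K]
  [IsScalarTower k O K]

/-- `IsRationalValuationFamily.ball n` as an `O`-submodule. -/
def ball (hO : h.IsOrder O) (n : ι → ℤ) : Submodule O K where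
  __ := h.ball n
  smul_mem' o x hx := by
    rw [Algebra.smul_def, ← zero_add n]
    exact h.mul_mem_ball (hO.one_le_ball (Submodule.mem_one.2 ⟨o, rfl⟩)) hx

variable (hO : h.IsOrder O)

theorem mem_ball {n : ι → ℤ} {x : K} : x ∈ hO.ball n ↔ x ∈ h.ball n :=
  Iff.rfl

include hO

theorem exists_forall_one_div_ball_eq [Finite ι] [Nonempty ι] (hk : ENat.card ι < ENat.card k) :
    ∃ γ, ∀ n, 1 / hO.ball n = hO.ball (γ - n) := by
  obtain ⟨N, hN⟩ := hO.exists_ball_le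
  obtain ⟨z, hz0, hz⟩ := h.exists_forall_val_eq hk N
  have hzdiv : z ∈ (1 : Submodule O K) / hO.ball 0 :=
    Submodule.mem_div_iff_forall_mul_mem.2 fun y hy =>
      hN (by simpa using h.mul_mem_ball (fun _ i => (hz i).ge : z ∈ h.ball N) hy)
  obtain ⟨γ, hγ⟩ := h.exists_eq_ball hk
    (W := ((1 : Submodule O K) / hO.ball 0).restrictScalars k) (q := 0)
    (Submodule.ne_bot_iff _ |>.2 ⟨z, hzdiv, hz0⟩)
    (fun x hx => hO.one_le_ball (by
      simpa using Submodule.mem_div_iff_forall_mul_mem.1 hx 1 h.one_mem_ball_zero))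
    (fun x hx y hy => Submodule.mem_div_iff_forall_mul_mem.2 fun b hb => by
      rw [mul_assoc]
      exact Submodule.mem_div_iff_forall_mul_mem.1 hx _
        (hO.mem_ball.2 (by simpa using h.mul_mem_ball hy hb)))
  refine ⟨γ, fun n => Submodule.ext fun x => ?_⟩
  obtain ⟨u, hu0, hu⟩ := h.exists_forall_val_eq hk n
  obtain rfl : (fun i => v i u) = n := funext hu
  rw [mem_ball, ← h.mul_mem_ball_iff hu0, ← hγ]
  simp only [Submodule.restrictScalars_mem, Submodule.mem_div_iff_forall_mul_mem]
  refine ⟨fun hx y hy => ?_, fun hx y hy => ?_⟩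
  · rw [mul_comm u, mul_assoc]
    exact hx _ ((h.mul_mem_ball_iff hu0).2 (by rwa [sub_self]))
  · have := hx (u⁻¹ * y) ((h.inv_mul_mem_ball_iff hu0).2 (by rwa [zero_add]))
    rwa [mul_comm u, mul_assoc, mul_inv_cancel_left₀ hu0] at this

theorem one_inf_ball_sub_single_le [DecidableEq ι] {γ : ι → ℤ}
    (hγ : ∀ n, 1 / hO.ball n = hO.ball (γ - n)) (i : ι) :
    (1 : Submodule O K).restrictScalars k ⊓ h.ball (γ - Pi.single i 1) ≤ h.ball γ := by
  rintro x ⟨hx1, hx⟩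
  by_contra hx'
  have hγle : h.ball γ ≤ (1 : Submodule O K).restrictScalars k := fun y hy => by
    have hy : y ∈ 1 / hO.ball 0 := by rwa [hγ, sub_zero]
    simpa using Submodule.mem_div_iff_forall_mul_mem.1 hy 1 h.one_mem_ball_zero
  have hle : h.ball (γ - Pi.single i 1) ≤ (1 : Submodule O K).restrictScalars k :=
    h.ball_le_of_mem (i := i) (by simpa using hγle) hx (by simpa using hx') hx1
  have hone : (1 : K) ∈ hO.ball (γ - (γ - Pi.single i 1)) := by
    rw [← hγ, Submodule.one_mem_div]
    exact hle
  have := hone one_ne_zero i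
  simp [map_one_of_map_mul (h.mul i)] at this

theorem one_inf_ball_le_of_not_one_inf_ball_le [DecidableEq ι] {γ w : ι → ℤ} {i : ι}
    (hγ : ∀ n, 1 / hO.ball n = hO.ball (γ - n))
    (hw : ¬(1 : Submodule O K).restrictScalars k ⊓ h.ball w ≤ h.ball (w + Pi.single i 1)) :
    (1 : Submodule O K).restrictScalars k ⊓ h.ball (γ - w - Pi.single i 1) ≤ h.ball (γ - w) := by
  rintro z ⟨hz1, hz⟩
  by_contra hz'
  obtain ⟨x, ⟨hx1, hx⟩, hx'⟩ := SetLike.not_le_iff_exists.1 hw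
  have hxz1 : x * z ∈ (1 : Submodule O K) :=
    (one_mul (1 : Submodule O K)).le (Submodule.mul_mem_mul hx1 hz1)
  have hxz : x * z ∈ h.ball (γ - Pi.single i 1) := by
    have := h.mul_mem_ball hx hz
    rwa [sub_right_comm, add_sub_cancel] at this
  have hxz' := h.mul_notMem_ball hx hx' hz (by rwa [sub_add_cancel])
  rw [add_assoc, sub_add_cancel, add_sub_cancel] at hxz'
  exact hxz' (hO.one_inf_ball_sub_single_le hγ i ⟨hxz1, hxz⟩)

-- Duality is applied to `a = O + ball (γ - w)`: if `O` had no element of level `w` exactly at `i`,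
-- then `1 / a` would lie in `ball (w + e i)` and its dual `a` would contain `ball (γ - w - e i)`.
theorem not_one_inf_ball_le_of_one_inf_ball_le [DecidableEq ι] {γ w : ι → ℤ} {i : ι}
    (hγ : ∀ n, 1 / hO.ball n = hO.ball (γ - n))
    (hdual : 1 ⊔ hO.ball (γ - w) = 1 / (1 / (1 ⊔ hO.ball (γ - w))))
    (hw : (1 : Submodule O K).restrictScalars k ⊓ h.ball (γ - w - Pi.single i 1) ≤
      h.ball (γ - w)) :
    ¬(1 : Submodule O K).restrictScalars k ⊓ h.ball w ≤ h.ball (w + Pi.single i 1) := by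
  intro hlevel
  have hdiv : 1 / (1 ⊔ hO.ball (γ - w)) ≤ hO.ball (w + Pi.single i 1) := fun x hx => by
    rw [Submodule.mem_div_iff_forall_mul_mem] at hx
    have hx1 : x ∈ (1 : Submodule O K) := by
      simpa using hx 1 (Submodule.mem_sup_left (Submodule.one_le.1 le_rfl))
    have hxw : x ∈ 1 / hO.ball (γ - w) := Submodule.mem_div_iff_forall_mul_mem.2 fun y hy =>
      hx y (Submodule.mem_sup_right hy)
    rw [hγ, sub_sub_cancel] at hxw
    exact hlevel ⟨hx1, hxw⟩
  have hle : hO.ball (γ - w - Pi.single i 1) ≤ 1 ⊔ hO.ball (γ - w) := by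
    rw [hdual, sub_sub, ← hγ, Submodule.le_div_iff]
    exact fun x hx y hy => Submodule.mem_div_iff_forall_mul_mem.1 hx y (hdiv hy)
  obtain ⟨t, ht, ht'⟩ := h.exists_mem_ball_notMem (γ - w - Pi.single i 1) i
  rw [sub_add_cancel] at ht'
  obtain ⟨o, ho, b, hb, rfl⟩ := Submodule.mem_sup.1 (hle ht)
  have hb' : b ∈ h.ball (γ - w - Pi.single i 1) :=
    h.ball_anti (sub_le_self _ (Pi.single_nonneg.2 zero_le_one)) hb
  exact ht' (add_mem (hw ⟨ho, by simpa using sub_mem ht hb'⟩) hb)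

theorem ball_le_one_of_isSymmetricAbout [Finite ι] [DecidableEq ι] {γ : ι → ℤ}
    (hγ : h.IsSymmetricAbout ((1 : Submodule O K).restrictScalars k) γ) :
    h.ball γ ≤ (1 : Submodule O K).restrictScalars k := by
  obtain ⟨N, hN⟩ := hO.exists_ball_le
  refine h.le_of_valueSet_subset hN le_rfl ?_
  rintro _ ⟨z, hz, hz0, rfl⟩
  obtain ⟨y, hy, hy0, hyz⟩ := (hγ fun i => v i z).2 fun i => inf_le_left.trans
    (hO.one_le_ball.trans (h.ball_anti (sub_nonpos.2 (hz hz0))))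
  exact ⟨y, ⟨hy, fun _ i => (hz hz0 i).trans_eq (congrFun hyz i)⟩, hy0, hyz⟩

theorem exists_isDualizing_orthogonal_one_eq [Finite ι] [DecidableEq ι]
    (hk : ENat.card ι < ENat.card k) {γ : ι → ℤ}
    (hγ : h.IsSymmetricAbout ((1 : Submodule O K).restrictScalars k) γ) :
    ∃ φ, h.IsDualizing γ φ ∧ orthogonal φ (1 : Submodule O K) = 1 := by
  have hball := hO.ball_le_one_of_isSymmetricAbout hγ
  have hzero : 0 ∈ valueSet v ((1 : Submodule O K).restrictScalars k) :=
    ⟨1, Submodule.mem_one.2 ⟨1, map_one _⟩, one_ne_zero,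
      funext fun i => (map_one_of_map_mul (h.mul i)).symm⟩
  obtain ⟨φ, hφ, hker⟩ := h.exists_isDualizing hk hball (by simpa using (hγ 0).1 hzero)
  have hle : 1 ≤ orthogonal φ (1 : Submodule O K) := fun x hx y hy =>
    hker ((one_mul (1 : Submodule O K)).le (Submodule.mul_mem_mul hx hy))
  refine ⟨φ, hφ, le_antisymm ?_ hle⟩
  refine h.le_of_valueSet_subset (B := (1 : Submodule O K).restrictScalars k)
    (W := (orthogonal φ 1).restrictScalars k) hball (hφ.orthogonal_le_ball hball) ?_
  rintro _ ⟨z, hz, hz0, rfl⟩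
  obtain ⟨x, hx, hx0, hxz⟩ := (hγ fun i => v i z).2 fun i y ⟨hy1, hy⟩ => by
    rw [sub_right_comm] at hy
    exact (h.mul_mem_ball_iff hz0).1
      (hφ.ball_sub_single_inf_ker_le i ⟨(h.mul_mem_ball_iff hz0).2 hy, hz y hy1⟩)
  exact ⟨x, ⟨hx, hle hx⟩, hx0, hxz⟩

theorem one_div_one_div_eq_of_isSymmetricAbout [Finite ι] [DecidableEq ι]
    (hk : ENat.card ι < ENat.card k) {γ : ι → ℤ}
    (hγ : h.IsSymmetricAbout ((1 : Submodule O K).restrictScalars k) γ)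
    {a : Submodule O K} {p q : ι → ℤ} (hp : h.ball p ≤ a.restrictScalars k)
    (hq : a.restrictScalars k ≤ h.ball q) : 1 / (1 / a) = a := by
  obtain ⟨φ, hφ, hone⟩ := hO.exists_isDualizing_orthogonal_one_eq hk hγ
  have hdiv (b : Submodule O K) : 1 / b = orthogonal φ b := by rw [orthogonal_eq_div, hone]
  rw [hdiv, hdiv, hφ.orthogonal_orthogonal hp hq]

theorem exists_isSymmetricAbout_iff [Finite ι] [DecidableEq ι] [Nonempty ι]
    (hk : ENat.card ι < ENat.card k) :
    (∃ γ, h.IsSymmetricAbout ((1 : Submodule O K).restrictScalars k) γ) ↔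
      ∀ a : Submodule O K, (∃ p, h.ball p ≤ a.restrictScalars k) →
        (∃ q, a.restrictScalars k ≤ h.ball q) → a = 1 / (1 / a) := by
  refine ⟨fun ⟨γ, hγ⟩ a ⟨p, hp⟩ ⟨q, hq⟩ =>
    (hO.one_div_one_div_eq_of_isSymmetricAbout hk hγ hp hq).symm, fun hdual => ?_⟩
  obtain ⟨γ, hγ⟩ := hO.exists_forall_one_div_ball_eq hk
  refine ⟨γ, fun w => (h.mem_valueSet_iff hk).trans (forall_congr' fun i => ?_)⟩
  refine ⟨hO.one_inf_ball_le_of_not_one_inf_ball_le hγ,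
    hO.not_one_inf_ball_le_of_one_inf_ball_le hγ (hdual _ ⟨γ - w, ?_⟩ ⟨0 ⊓ (γ - w), ?_⟩)⟩
  · exact (le_sup_right : hO.ball (γ - w) ≤ 1 ⊔ hO.ball (γ - w))
  · refine (sup_le (fun x hx => ?_) (h.ball_anti inf_le_right) :
      1 ⊔ hO.ball (γ - w) ≤ hO.ball (0 ⊓ (γ - w)))
    exact h.ball_anti inf_le_left (hO.one_le_ball hx)

end

theorem isFracIdeal_iff {k ι : Type*} {O K : Type} [Field k] [CommRing O] [Field K] [Algebra k O]
    [Algebra O K] [FaithfulSMul O K] [Algebra k K] [IsScalarTower k O K] [Nonempty ι]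
    {v : ι → K → ℤ} {h : IsRationalValuationFamily k v} (hO : h.IsOrder O) {a : Submodule O K} :
    IsFracIdeal a ↔ (∃ p, h.ball p ≤ a.restrictScalars k) ∧
      ∃ q, a.restrictScalars k ≤ h.ball q := by
  classical
  obtain ⟨N, hN⟩ := hO.exists_ball_le
  refine ⟨fun ⟨hne, x, hx, hxa⟩ => ⟨?_, ?_⟩, fun ⟨⟨p, hp⟩, q, hq⟩ => ⟨?_, ?_⟩⟩
  · obtain ⟨z, hz, hz0⟩ := a.exists_mem_ne_zero_of_ne_bot hne
    refine ⟨N + fun i => v i z, fun y hy => ?_⟩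
    obtain ⟨o, ho⟩ := Submodule.mem_one.1 (hN ((h.inv_mul_mem_ball_iff hz0).2 hy))
    rw [← mul_inv_cancel_left₀ hz0 y, ← ho, mul_comm, ← Algebra.smul_def]
    exact a.smul_mem o hz
  · have hx0 : algebraMap O K x ≠ 0 :=
      nonZeroDivisors.ne_zero (nonZeroDivisors_le_comap_nonZeroDivisors_of_injective _
        (FaithfulSMul.algebraMap_injective O K) hx)
    refine ⟨0 - fun i => v i (algebraMap O K x), fun z hz => (h.mul_mem_ball_iff hx0).1 ?_⟩
    rw [← Algebra.smul_def]
    exact hO.one_le_ball (hxa z hz)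
  · obtain ⟨x, hx, hx'⟩ := h.exists_mem_ball_notMem p (Classical.arbitrary ι)
    exact a.ne_bot_iff.2 ⟨x, hp hx, ((h.notMem_ball_add_single_iff hx).1 hx').1⟩
  · obtain ⟨x, hx, hx'⟩ := h.exists_mem_ball_notMem (N ⊔ (N - q)) (Classical.arbitrary ι)
    have hx0 := ((h.notMem_ball_add_single_iff hx).1 hx').1
    obtain ⟨o, rfl⟩ := Submodule.mem_one.1 (hN (h.ball_anti le_sup_left hx))
    refine ⟨o, mem_nonZeroDivisors_of_injective (FaithfulSMul.algebraMap_injective O K)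
      (mem_nonZeroDivisors_of_ne_zero hx0), fun z hz => hN ?_⟩
    simpa [Algebra.smul_def] using h.mul_mem_ball (h.ball_anti le_sup_right hx) (hq hz)

end IsOrder

end Order
end IsRationalValuationFamily

section Semilocal

theorem exists_notMem_forall_ne_mem_of_isMaximal {A ι : Type*} [CommRing A] [Finite ι]
    {M : ι → Ideal A} (hMmax : ∀ i, (M i).IsMaximal) (hMinj : Function.Injective M) (i : ι) :
    ∃ a, a ∉ M i ∧ ∀ j, j ≠ i → a ∈ M j := by
  classical
  cases nonempty_fintype ι
  have hnot : ¬(Finset.univ.erase i).inf M ≤ M i := fun hle => by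
    obtain ⟨j, hj, hji⟩ := ((hMmax i).isPrime.inf_le').1 hle
    exact Finset.ne_of_mem_erase hj (hMinj ((hMmax j).eq_of_le (hMmax i).ne_top hji))
  obtain ⟨a, ha, ha'⟩ := SetLike.not_le_iff_exists.1 hnot
  exact ⟨a, ha', fun j hj => Submodule.mem_finsetInf.1 ha j (by simpa using hj)⟩

theorem exists_sub_smul_mem_of_surjective_algebraMap_quotient {k A : Type*} [Field k] [CommRing A]
    [Algebra k A] {I : Ideal A} (hI : Function.Surjective (algebraMap k (A ⧸ I))) (a : A) {b : A}
    (hb : b ∉ I) : ∃ c : k, a - c • b ∈ I := by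
  obtain ⟨c₁, hc₁⟩ := hI (Ideal.Quotient.mk I a)
  obtain ⟨c₂, hc₂⟩ := hI (Ideal.Quotient.mk I b)
  have hc₂0 : c₂ ≠ 0 := by
    rintro rfl
    exact hb (Ideal.Quotient.eq_zero_iff_mem.1 (by rw [← hc₂, map_zero]))
  refine ⟨c₁ / c₂, Ideal.Quotient.eq_zero_iff_mem.1 ?_⟩
  rw [map_sub, Algebra.smul_def, map_mul, ← hc₁, ← hc₂, ← Ideal.Quotient.algebraMap_eq,
    ← IsScalarTower.algebraMap_apply, ← map_mul, div_mul_cancel₀ _ hc₂0, sub_self]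

variable {O K ι : Type*} [CommRing O] [Field K] [Algebra O K] {A : Subalgebra O K}
  {M : ι → Ideal A} {v : ι → K → ℤ}

theorem exists_ne_zero_val_eq_zero_forall_ne_one_le_val [Finite ι]
    (hMmax : ∀ i, (M i).IsMaximal) (hMinj : Function.Injective M)
    (hvint : ∀ x : K, x ≠ 0 → (x ∈ A ↔ ∀ i, 0 ≤ v i x))
    (hvmax : ∀ (i : ι) (x : K) (hx : x ∈ A), x ≠ 0 → ((⟨x, hx⟩ : A) ∈ M i ↔ 1 ≤ v i x)) (i : ι) :
    ∃ x : K, x ≠ 0 ∧ v i x = 0 ∧ ∀ j, j ≠ i → 1 ≤ v j x := by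
  obtain ⟨⟨x, hx⟩, hxi, hxj⟩ := exists_notMem_forall_ne_mem_of_isMaximal hMmax hMinj i
  have hx0 : x ≠ 0 := by
    rintro rfl
    exact hxi (zero_mem (M i))
  refine ⟨x, hx0, ?_, fun j hj => (hvmax j x hx hx0).1 (hxj j hj)⟩
  have hlt := (hvmax i x hx hx0).not.1 hxi
  have hnonneg := (hvint x hx0).1 hx i
  omega

theorem exists_val_eq_forall_le_val [Finite ι]
    (hvmul : ∀ (i : ι) (x y : K), x ≠ 0 → y ≠ 0 → v i (x * y) = v i x + v i y)
    (hvsurj : ∀ (i : ι) (n : ℤ), ∃ x : K, x ≠ 0 ∧ v i x = n)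
    (hsep : ∀ i : ι, ∃ x : K, x ≠ 0 ∧ v i x = 0 ∧ ∀ j, j ≠ i → 1 ≤ v j x) (i : ι) (n : ι → ℤ) :
    ∃ x : K, x ≠ 0 ∧ v i x = n i ∧ ∀ j, n j ≤ v j x := by
  cases nonempty_fintype ι
  obtain ⟨x, hx0, hx⟩ := hvsurj i (n i)
  obtain ⟨u, hu0, hui, huj⟩ := hsep i
  set m := ∑ j, (n j - v j x).toNat
  have hval j : v j (x * u ^ m) = v j x + m * v j u := by
    rw [hvmul j _ _ hx0 (pow_ne_zero m hu0), map_pow_of_map_mul (hvmul j) hu0]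
  have hvali : v i (x * u ^ m) = n i := by rw [hval, hui, hx, mul_zero, add_zero]
  refine ⟨x * u ^ m, mul_ne_zero hx0 (pow_ne_zero m hu0), hvali, fun j => ?_⟩
  obtain rfl | hj := eq_or_ne j i
  · exact hvali.ge
  · have hmj : (n j - v j x).toNat ≤ m :=
      Finset.single_le_sum_of_canonicallyOrdered (f := fun j => (n j - v j x).toNat)
        (Finset.mem_univ j)
    have hmu : (m : ℤ) ≤ m * v j u := le_mul_of_one_le_right (Int.natCast_nonneg m) (huj j hj)
    rw [hval]
    omega

variable {k : Type*} [Field k] [Algebra k O] [Algebra k K] [IsScalarTower k O K]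

theorem val_algebraMap_eq_zero
    (hvmul : ∀ (i : ι) (x y : K), x ≠ 0 → y ≠ 0 → v i (x * y) = v i x + v i y)
    (hvint : ∀ x : K, x ≠ 0 → (x ∈ A ↔ ∀ i, 0 ≤ v i x)) (i : ι) {c : k} (hc : c ≠ 0) :
    v i (algebraMap k K c) = 0 := by
  have hnonneg (c : k) (hc : c ≠ 0) : 0 ≤ v i (algebraMap k K c) :=
    (hvint _ (by simpa using hc)).1 (algebraMap k A c).2 i
  have hinv := hnonneg c⁻¹ (inv_ne_zero hc)
  rw [map_inv₀, map_inv_of_map_mul (hvmul i) (by simpa using hc)] at hinv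
  exact le_antisymm (neg_nonneg.1 hinv) (hnonneg c hc)

theorem exists_pos_val_sub_algebraMap
    (hvmul : ∀ (i : ι) (x y : K), x ≠ 0 → y ≠ 0 → v i (x * y) = v i x + v i y)
    (hvint : ∀ x : K, x ≠ 0 → (x ∈ A ↔ ∀ i, 0 ≤ v i x))
    (hvmax : ∀ (i : ι) (x : K) (hx : x ∈ A), x ≠ 0 → ((⟨x, hx⟩ : A) ∈ M i ↔ 1 ≤ v i x))
    (hres : ∀ i, Function.Surjective (algebraMap k (A ⧸ M i)))
    (happrox : ∀ (i : ι) (n : ι → ℤ), ∃ x : K, x ≠ 0 ∧ v i x = n i ∧ ∀ j, n j ≤ v j x)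
    (i : ι) {x : K} (hx0 : x ≠ 0) (hxi : v i x = 0) :
    ∃ c : k, x - algebraMap k K c ≠ 0 → 0 < v i (x - algebraMap k K c) := by
  obtain ⟨s, hs0, hsi, hs⟩ := happrox i (fun j => max 0 (-v j x))
  rw [hxi, neg_zero, max_self] at hsi
  have hsA : s ∈ A := (hvint s hs0).2 fun j => (le_max_left _ _).trans (hs j)
  have hsxA : s * x ∈ A := (hvint _ (mul_ne_zero hs0 hx0)).2 fun j => by
    rw [hvmul j _ _ hs0 hx0]
    exact neg_le_iff_add_nonneg.1 ((le_max_right _ _).trans (hs j))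
  have hsM : (⟨s, hsA⟩ : A) ∉ M i := (hvmax i s hsA hs0).not.2 (by omega)
  obtain ⟨c, hc⟩ :=
    exists_sub_smul_mem_of_surjective_algebraMap_quotient (hres i) ⟨s * x, hsxA⟩ hsM
  refine ⟨c, fun hxc0 => ?_⟩
  have hcoe : ((⟨s * x, hsxA⟩ - c • ⟨s, hsA⟩ : A) : K) = s * (x - algebraMap k K c) := by
    rw [mul_sub, mul_comm s (algebraMap k K c), ← Algebra.smul_def]
    rfl
  have hval := (hvmax i _ (hcoe ▸ Subtype.prop _) (mul_ne_zero hs0 hxc0)).1 (by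
    convert hc
    exact hcoe.symm)
  rw [hvmul i _ _ hs0 hxc0, hsi, zero_add] at hval
  exact hval

theorem isRationalValuationFamily_of_isMaximal [Finite ι]
    (hMmax : ∀ i, (M i).IsMaximal) (hMinj : Function.Injective M)
    (hvmul : ∀ (i : ι) (x y : K), x ≠ 0 → y ≠ 0 → v i (x * y) = v i x + v i y)
    (hvadd : ∀ (i : ι) (x y : K), x ≠ 0 → y ≠ 0 → x + y ≠ 0 → min (v i x) (v i y) ≤ v i (x + y))
    (hvsurj : ∀ (i : ι) (n : ℤ), ∃ x : K, x ≠ 0 ∧ v i x = n)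
    (hvint : ∀ x : K, x ≠ 0 → (x ∈ A ↔ ∀ i, 0 ≤ v i x))
    (hvmax : ∀ (i : ι) (x : K) (hx : x ∈ A), x ≠ 0 → ((⟨x, hx⟩ : A) ∈ M i ↔ 1 ≤ v i x))
    (hres : ∀ i, Function.Surjective (algebraMap k (A ⧸ M i))) :
    IsRationalValuationFamily k v :=
  have happrox := exists_val_eq_forall_le_val hvmul hvsurj
    (exists_ne_zero_val_eq_zero_forall_ne_one_le_val hMmax hMinj hvint hvmax)
  { mul := hvmul
    add := hvadd
    const := fun i _ hc => val_algebraMap_eq_zero hvmul hvint i hc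
    residue := fun i _ => exists_pos_val_sub_algebraMap hvmul hvint hvmax hres happrox i
    approx := happrox }

theorem IsRationalValuationFamily.isOrder_of_finite [IsFractionRing O K]
    (h : IsRationalValuationFamily k v) (hvint : ∀ x : K, x ≠ 0 → (x ∈ A ↔ ∀ i, 0 ≤ v i x))
    (hfin : Module.Finite O A) : h.IsOrder O where
  one_le_ball x hx hx0 := by
    obtain ⟨o, rfl⟩ := Submodule.mem_one.1 hx
    exact (hvint _ hx0).1 (algebraMap_mem A o)
  exists_ball_le := by
    obtain ⟨d, hd, hdO⟩ := FractionalIdeal.isFractional_of_fg (S := nonZeroDivisors O)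
      (I := Subalgebra.toSubmodule A) (Module.Finite.iff_fg.1 hfin)
    have := (algebraMap O K).domain_nontrivial
    have hd0 : algebraMap O K d ≠ 0 := IsFractionRing.to_map_ne_zero_of_mem_nonZeroDivisors hd
    refine ⟨fun i => v i (algebraMap O K d), fun x hx => ?_⟩
    have hdx : (algebraMap O K d)⁻¹ * x ∈ h.ball 0 :=
      (h.inv_mul_mem_ball_iff hd0).2 (by rwa [zero_add])
    have hdxA : (algebraMap O K d)⁻¹ * x ∈ A := by
      by_cases hdx0 : (algebraMap O K d)⁻¹ * x = 0
      · exact hdx0 ▸ A.zero_mem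
      · exact (hvint _ hdx0).2 (hdx hdx0)
    obtain ⟨o, ho⟩ := hdO _ hdxA
    rw [Algebra.smul_def, mul_inv_cancel_left₀ hd0] at ho
    exact Submodule.mem_one.2 ⟨o, ho⟩

end Semilocal

theorem statement_15_general {k O K : Type} [Field k] [CommRing O] [Algebra k O] [Field K]
    [Algebra O K] [IsFractionRing O K] [Algebra k K] [IsScalarTower k O K]
    (hfin : Module.Finite O (integralClosure O K))
    {r : ℕ} (hk : (r : ℕ∞) < ENat.card k) {M : Fin r → Ideal (integralClosure O K)}
    (hMmax : ∀ i, (M i).IsMaximal)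
    (hMinj : Function.Injective M)
    (hMall : ∀ P : Ideal (integralClosure O K), P.IsMaximal → ∃ i, P = M i)
    {v : Fin r → K → ℤ}
    (hvmul : ∀ (i : Fin r) (x y : K), x ≠ 0 → y ≠ 0 → v i (x * y) = v i x + v i y)
    (hvadd : ∀ (i : Fin r) (x y : K), x ≠ 0 → y ≠ 0 → x + y ≠ 0 →
      min (v i x) (v i y) ≤ v i (x + y))
    (hvsurj : ∀ (i : Fin r) (n : ℤ), ∃ x : K, x ≠ 0 ∧ v i x = n)
    (hvint : ∀ x : K, x ≠ 0 → (x ∈ integralClosure O K ↔ ∀ i, 0 ≤ v i x))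
    (hvmax : ∀ (i : Fin r) (x : K) (hx : x ∈ integralClosure O K), x ≠ 0 →
      ((⟨x, hx⟩ : integralClosure O K) ∈ M i ↔ 1 ≤ v i x))
    (hres : ∀ i, Function.Surjective (algebraMap k ((integralClosure O K) ⧸ M i))) :
    IsSymmetricSet
        {w : Fin r → ℤ | ∃ z : K, z ∈ (1 : Submodule O K) ∧ z ≠ 0 ∧ w = fun i => v i z} ↔
      ∀ a : Submodule O K, IsFracIdeal a →
        a = (1 : Submodule O K) / ((1 : Submodule O K) / a) := by
  have h : IsRationalValuationFamily k v :=
    isRationalValuationFamily_of_isMaximal hMmax hMinj hvmul hvadd hvsurj hvint hvmax hres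
  have hO : h.IsOrder O := h.isOrder_of_finite hvint hfin
  obtain ⟨P, hP⟩ := Ideal.exists_maximal (integralClosure O K)
  have : Nonempty (Fin r) := ⟨(hMall P hP).choose⟩
  refine h.isSymmetricSet_valueSet_iff.trans
    ((hO.exists_isSymmetricAbout_iff (by simpa using hk)).trans ?_)
  simp only [hO.isFracIdeal_iff, and_imp]

theorem statement_15 (k O K : Type) [Field k] [PerfectField k]
    [Infinite k]
    [CommRing O] [IsDomain O] [IsNoetherianRing O] [IsLocalRing O] [Algebra k O]
    [Field K] [Algebra O K] [IsFractionRing O K] [Algebra k K] [IsScalarTower k O K]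
    (hdim : ringKrullDim O = 1)
    (hfin : Module.Finite O (integralClosure O K))
    (OB : Submodule O K) (hOB : OB = Subalgebra.toSubmodule (integralClosure O K))
    (r : ℕ) (M : Fin r → Ideal (integralClosure O K))
    (hMmax : ∀ i, (M i).IsMaximal)
    (hMinj : Function.Injective M)
    (hMall : ∀ P : Ideal (integralClosure O K), P.IsMaximal → ∃ i, P = M i)
    (v : Fin r → K → ℤ)
    (hvmul : ∀ (i : Fin r) (x y : K), x ≠ 0 → y ≠ 0 → v i (x * y) = v i x + v i y)
    (hvadd : ∀ (i : Fin r) (x y : K), x ≠ 0 → y ≠ 0 → x + y ≠ 0 →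
      min (v i x) (v i y) ≤ v i (x + y))
    (hvsurj : ∀ (i : Fin r) (n : ℤ), ∃ x : K, x ≠ 0 ∧ v i x = n)
    (hvint : ∀ x : K, x ≠ 0 → (x ∈ integralClosure O K ↔ ∀ i, 0 ≤ v i x))
    (hvmax : ∀ (i : Fin r) (x : K) (hx : x ∈ integralClosure O K), x ≠ 0 →
      ((⟨x, hx⟩ : integralClosure O K) ∈ M i ↔ 1 ≤ v i x))
    (d : Fin r → ℕ) (hd : ∀ i, d i = Module.finrank k ((integralClosure O K) ⧸ M i))
    (hres : ∀ i, Function.Surjective (algebraMap k ((integralClosure O K) ⧸ M i)))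
    :
    IsSymmetricSet
        {w : Fin r → ℤ | ∃ z : K, z ∈ (1 : Submodule O K) ∧ z ≠ 0 ∧ w = fun i => v i z} ↔
      ∀ a : Submodule O K, IsFracIdeal a →
        a = (1 : Submodule O K) / ((1 : Submodule O K) / a) := by
  exact statement_15_general hfin (by simp) hMmax hMinj hMall hvmul hvadd hvsurj hvint hvmax hres
end

section
/- Let b be a fractional ideal of O with b·Ō = Ō (so b ⊆ Ō), and let c be a canonical ideal of O normalized so that c : Ō = J^K(γ^b). Then for every v ∈ ℤ^r: deg(J^{c:b}(v)) = deg(J^b(γ^b − v)) + dim_k(Ō/b) − (d_1 v_1 + ⋯ + d_r v_r). (Proposition 4.16; here dim_k(Ō/b) = dim_k(b·Ō/b), which equals the paper's dim_k(b/(b : Ō)) when b is self-dual) -/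
/-!
Duality `a ↦ c : a` reverses inclusions bijectively, so it preserves lengths of quotients; over a
local ring containing `k`, `k`-dimension is length times the residue degree, hence
`deg (c : a) + deg a` does not depend on `a`. Moreover `J^{c:b}(w) = c : (b + J^K(γ - w))`, because
`c : J^K(u) = J^K(γ - u)`, and `deg` is modular on sums and intersections. This leaves the degrees
of the `J^K(u)`. By approximation they are principal over `Ō`, so that
`deg J^K(u) = deg Ō - ∑ dᵢ uᵢ`.
-/

section QuotientDimension

section

variable {O K : Type*} [CommRing O] [AddCommGroup K] [Module O K]

/-- The submodules of the quotient `A / B` form the interval `[B, A]`. -/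
def submoduleQuotientOrderIso {A B : Submodule O K} (h : B ≤ A) :
    Submodule O (A ⧸ B.comap A.subtype) ≃o Set.Icc B A :=
  (Submodule.comapMkQRelIso (B.comap A.subtype)).trans
    { toFun N := ⟨N.1.map A.subtype,
        (inf_eq_right.mpr h).symm.trans_le <|
          (Submodule.map_comap_subtype A B).symm.trans_le (Submodule.map_mono N.2),
        Submodule.map_subtype_le _ _⟩
      invFun N := ⟨N.1.comap A.subtype, Submodule.comap_mono N.2.1⟩
      left_inv _ := Subtype.ext (Submodule.comap_map_eq_of_injective A.subtype_injective _)
      right_inv N := Subtype.ext <|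
        (Submodule.map_comap_subtype A N.1).trans (inf_eq_right.mpr N.2.2)
      map_rel_iff' := Submodule.map_le_map_iff_of_injective A.subtype_injective _ _ }

theorem coe_length_quotient_eq_krullDim_Icc {A B : Submodule O K} (h : B ≤ A) :
    (Module.length O (A ⧸ B.comap A.subtype) : WithBot ℕ∞) = Order.krullDim (Set.Icc B A) := by
  rw [Module.coe_length, Order.krullDim_eq_of_orderIso (submoduleQuotientOrderIso h)]

end

variable (k : Type) {O K : Type} [Field k] [CommRing O] [CommRing K]
  [Algebra k O] [Algebra O K] [Algebra k K] [IsScalarTower k O K]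

theorem qdim_congr_of_krullDim_Icc [IsLocalRing O] {A B A' B' : Submodule O K} (h : B ≤ A)
    (h' : B' ≤ A') (hdim : Order.krullDim (Set.Icc B A) = Order.krullDim (Set.Icc B' A')) :
    qdim k A B = qdim k A' B' := by
  have hlength : Module.length O (A ⧸ B.comap A.subtype) =
      Module.length O (A' ⧸ B'.comap A'.subtype) := by
    apply WithBot.coe_injective
    rw [coe_length_quotient_eq_krullDim_Icc h, coe_length_quotient_eq_krullDim_Icc h', hdim]
  have hqdim (A B : Submodule O K) :
      qdim k A B = (Module.length k (A ⧸ B.comap A.subtype)).toNat := by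
    rw [Module.length_eq_rank]
    rfl
  rw [hqdim, hqdim, IsLocalRing.length_restrictScalars k O, hlength,
    ← IsLocalRing.length_restrictScalars k O]

theorem qdim_sup_right (A B : Submodule O K) : qdim k (A ⊔ B) B = qdim k A (A ⊓ B) :=
  ((LinearMap.quotientInfEquivSupQuotient A B).restrictScalars k).finrank_eq.symm

theorem qdim_map_equiv (e : K ≃ₗ[O] K) (A B : Submodule O K) :
    qdim k (A.map (e : K →ₗ[O] K)) (B.map (e : K →ₗ[O] K)) = qdim k A B := by
  have hmap : (B.comap A.subtype).map (e.submoduleMap A : A →ₗ[O] A.map (e : K →ₗ[O] K)) =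
      (B.map (e : K →ₗ[O] K)).comap (A.map (e : K →ₗ[O] K)).subtype := by
    ext ⟨_, x, hx, rfl⟩
    simp
  exact ((Submodule.Quotient.equiv _ _ (e.submoduleMap A) hmap).restrictScalars k).finrank_eq.symm

end QuotientDimension

section Colon

variable {O K : Type*} [CommRing O] [CommRing K] [Algebra O K]

theorem submodule_div_antitone (c : Submodule O K) : Antitone (c / ·) := fun _ _ h =>
  Submodule.le_div_iff_mul_le.mpr <|
    (mul_le_mul_right h _).trans (Submodule.le_div_iff_mul_le.mp le_rfl)

theorem submodule_div_sup (a b c : Submodule O K) : c / (a ⊔ b) = c / a ⊓ c / b :=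
  eq_of_forall_le_iff fun x => by
    simp only [le_inf_iff, Submodule.le_div_iff_mul_le, Submodule.mul_sup, sup_le_iff]

theorem submodule_div_mul (a b c : Submodule O K) : c / (a * b) = c / a / b :=
  eq_of_forall_le_iff fun x => by
    simp only [Submodule.le_div_iff_mul_le, mul_assoc, mul_comm b a]

end Colon

namespace IsFracIdeal

variable {O K : Type} [CommRing O] [Field K] [Algebra O K] {a b x : Submodule O K}

theorem isFractional (ha : IsFracIdeal a) : IsFractional (nonZeroDivisors O) a := by
  obtain ⟨-, y, hy, hya⟩ := ha
  exact ⟨y, hy, fun z hz => Submodule.mem_one.mp (hya z hz)⟩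

theorem of_isFractional (ha : a ≠ ⊥) (ha' : IsFractional (nonZeroDivisors O) a) :
    IsFracIdeal a := by
  obtain ⟨y, hy, hya⟩ := ha'
  exact ⟨ha, y, hy, fun z hz => Submodule.mem_one.mpr (hya z hz)⟩

theorem of_le_of_le (ha : IsFracIdeal a) (hb : IsFracIdeal b) (hbx : b ≤ x) (hxa : x ≤ a) :
    IsFracIdeal x := by
  obtain ⟨y, hy, hya⟩ := ha.2
  exact ⟨ne_bot_of_le_ne_bot hb.1 hbx, y, hy, fun z hz => hya z (hxa hz)⟩

theorem sup (ha : IsFracIdeal a) (hb : IsFracIdeal b) : IsFracIdeal (a ⊔ b) :=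
  of_isFractional (ne_bot_of_le_ne_bot ha.1 le_sup_left) (ha.isFractional.sup hb.isFractional)

variable [IsFractionRing O K]

theorem of_fg (ha : a ≠ ⊥) (hfg : a.FG) : IsFracIdeal a :=
  of_isFractional ha (FractionalIdeal.isFractional_of_fg hfg)

theorem of_algebraMap_mem {p : O} (hp : p ≠ 0) (hpa : algebraMap O K p ∈ a)
    (ha : IsFractional (nonZeroDivisors O) a) : IsFracIdeal a :=
  of_isFractional (fun h => hp <| by simpa [h] using hpa) ha

variable [IsDomain O]

theorem exists_algebraMap_mem (ha : IsFracIdeal a) : ∃ p : O, p ≠ 0 ∧ algebraMap O K p ∈ a :=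
  FractionalIdeal.exists_ne_zero_mem_isInteger (I := ⟨a, ha.isFractional⟩) fun h =>
    ha.1 ((congrArg Subtype.val h).trans FractionalIdeal.coe_zero)

theorem inf (ha : IsFracIdeal a) (hb : IsFracIdeal b) : IsFracIdeal (a ⊓ b) := by
  obtain ⟨p, hp, hpa⟩ := ha.exists_algebraMap_mem
  obtain ⟨q, hq, hqb⟩ := hb.exists_algebraMap_mem
  refine of_algebraMap_mem (mul_ne_zero hp hq) ⟨?_, ?_⟩ (ha.isFractional.inf_right b)
  · rw [mul_comm, map_mul, ← Algebra.smul_def]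
    exact a.smul_mem q hpa
  · rw [map_mul, ← Algebra.smul_def]
    exact b.smul_mem p hqb

theorem div (ha : IsFracIdeal a) (hb : IsFracIdeal b) : IsFracIdeal (a / b) := by
  obtain ⟨p, hp, hpa⟩ := ha.exists_algebraMap_mem
  obtain ⟨y, hy, hyb⟩ := hb.2
  refine of_algebraMap_mem (mul_ne_zero hp (nonZeroDivisors.ne_zero hy))
    (Submodule.mem_div_iff_forall_mul_mem.mpr fun z hz => ?_)
    (ha.isFractional.div_of_nonzero hb.isFractional hb.1)
  obtain ⟨t, ht⟩ := Submodule.mem_one.mp (hyb z hz)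
  rw [map_mul, mul_assoc, ← Algebra.smul_def y, ← ht, mul_comm, ← Algebra.smul_def]
  exact a.smul_mem t hpa

end IsFracIdeal

namespace IsCanonicalIdeal

variable {O K : Type} [CommRing O] [Field K] [Algebra O K] {a b c : Submodule O K}

theorem div_le_div_iff (hc : IsCanonicalIdeal c) (ha : IsFracIdeal a) (hb : IsFracIdeal b) :
    c / a ≤ c / b ↔ b ≤ a := by
  refine ⟨fun h => ?_, fun h => submodule_div_antitone c h⟩
  rw [hc.2 a ha, hc.2 b hb]
  exact submodule_div_antitone c h

variable [IsDomain O] [IsFractionRing O K]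

/-- Duality `x ↦ c : x` with respect to a canonical ideal `c`, as an order-reversing bijection from
the interval `[b, a]` of fractional ideals to the interval `[c : a, c : b]`. -/
def divOrderIso (hc : IsCanonicalIdeal c) (ha : IsFracIdeal a) (hb : IsFracIdeal b) :
    Set.Icc b a ≃o (Set.Icc (c / a) (c / b))ᵒᵈ where
  toFun x := .toDual ⟨c / x.1, submodule_div_antitone c x.2.2, submodule_div_antitone c x.2.1⟩
  invFun y := ⟨c / y.ofDual.1,
    (hc.2 b hb).trans_le (submodule_div_antitone c y.ofDual.2.2),
    (submodule_div_antitone c y.ofDual.2.1).trans_eq (hc.2 a ha).symm⟩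
  left_inv x := Subtype.ext (hc.2 x.1 (ha.of_le_of_le hb x.2.1 x.2.2)).symm
  right_inv y := Subtype.ext (hc.2 _ ((hc.1.div hb).of_le_of_le (hc.1.div ha)
    y.ofDual.2.1 y.ofDual.2.2)).symm
  map_rel_iff' {x y} :=
    hc.div_le_div_iff (ha.of_le_of_le hb y.2.1 y.2.2) (ha.of_le_of_le hb x.2.1 x.2.2)

theorem qdim_div (k : Type) [Field k] [IsLocalRing O] [Algebra k O] [Algebra k K]
    [IsScalarTower k O K] (hc : IsCanonicalIdeal c) (ha : IsFracIdeal a) (hb : IsFracIdeal b)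
    (h : b ≤ a) : qdim k (c / b) (c / a) = qdim k a b :=
  qdim_congr_of_krullDim_Icc k (submodule_div_antitone c h) h <| by
    rw [Order.krullDim_eq_of_orderIso (hc.divOrderIso ha hb), Order.krullDim_orderDual]

end IsCanonicalIdeal

/-- `deg` is a degree function on fractional ideals, determined up to an additive constant: its
differences along inclusions are the dimensions of the quotients. -/
def IsDegree (k : Type) {O K : Type} [Field k] [CommRing O] [CommRing K] [Algebra k O]
    [Algebra O K] [Algebra k K] [IsScalarTower k O K] (deg : Submodule O K → ℤ) : Prop :=
  ∀ a b : Submodule O K, IsFracIdeal a → IsFracIdeal b → b ≤ a → deg a - deg b = qdim k a b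

namespace IsDegree

variable {k O K : Type} [Field k] [CommRing O] [IsDomain O] [Algebra k O] [Field K]
  [Algebra O K] [IsFractionRing O K] [Algebra k K] [IsScalarTower k O K]
  {deg : Submodule O K → ℤ} {a b c : Submodule O K}

theorem sup_add_inf (hdeg : IsDegree k deg) (ha : IsFracIdeal a) (hb : IsFracIdeal b) :
    deg (a ⊔ b) + deg (a ⊓ b) = deg a + deg b := by
  have hsup := hdeg _ _ (ha.sup hb) hb le_sup_right
  have hinf := hdeg _ _ ha (ha.inf hb) inf_le_left
  rw [qdim_sup_right] at hsup
  linarith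

theorem div_add_of_le [IsLocalRing O] (hdeg : IsDegree k deg) (hc : IsCanonicalIdeal c)
    (ha : IsFracIdeal a) (hb : IsFracIdeal b) (h : b ≤ a) :
    deg (c / a) + deg a = deg (c / b) + deg b := by
  have hab := hdeg a b ha hb h
  have hdual := hdeg _ _ (hc.1.div hb) (hc.1.div ha) (submodule_div_antitone c h)
  rw [hc.qdim_div k ha hb h] at hdual
  linarith

theorem div_add [IsLocalRing O] (hdeg : IsDegree k deg) (hc : IsCanonicalIdeal c)
    (ha : IsFracIdeal a) (hb : IsFracIdeal b) : deg (c / a) + deg a = deg (c / b) + deg b := by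
  rw [← hdeg.div_add_of_le hc (ha.sup hb) ha le_sup_left,
    hdeg.div_add_of_le hc (ha.sup hb) hb le_sup_right]

end IsDegree

open Classical in
/-- The additive valuation of a field with prescribed integer values on the nonzero elements, the
value at `0` being reset to `⊤`. -/
noncomputable def addValuationOfInt {K : Type*} [Field K] (v : K → ℤ)
    (hmul : ∀ x y, x ≠ 0 → y ≠ 0 → v (x * y) = v x + v y)
    (hadd : ∀ x y, x ≠ 0 → y ≠ 0 → x + y ≠ 0 → min (v x) (v y) ≤ v (x + y)) :
    AddValuation K (WithTop ℤ) :=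
  .of (fun x => if x = 0 then ⊤ else v x) (if_pos rfl)
    (by simpa using hmul 1 1 one_ne_zero one_ne_zero)
    (fun x y => by
      by_cases hx : x = 0; · simp [hx]
      by_cases hy : y = 0; · simp [hy]
      by_cases hxy : x + y = 0; · simp [hxy]
      simpa [hx, hy, hxy] using hadd x y hx hy hxy)
    (fun x y => by
      by_cases hx : x = 0; · simp [hx]
      by_cases hy : y = 0; · simp [hy]
      simp [hx, hy, hmul x y hx hy])

section

variable {K : Type*} [Field K] {v : K → ℤ}
  {hmul : ∀ x y, x ≠ 0 → y ≠ 0 → v (x * y) = v x + v y}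
  {hadd : ∀ x y, x ≠ 0 → y ≠ 0 → x + y ≠ 0 → min (v x) (v y) ≤ v (x + y)}

theorem addValuationOfInt_of_ne_zero {x : K} (hx : x ≠ 0) :
    addValuationOfInt v hmul hadd x = v x :=
  if_neg hx

theorem coe_le_addValuationOfInt_iff {x : K} {n : ℤ} :
    n ≤ addValuationOfInt v hmul hadd x ↔ x = 0 ∨ n ≤ v x := by
  by_cases hx : x = 0
  · simp [hx]
  · simp [hx, addValuationOfInt_of_ne_zero hx]

end

/-- The family `v` of normalized discrete valuations of the field `K` attached to the maximal
ideals `M i` of a semilocal Dedekind domain `B` with fraction field `K`. The valuations are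
integer-valued, so nothing is said about the junk value `v i 0`. -/
structure IsValuationFamily {O K ι : Type*} [CommRing O] [Field K] [Algebra O K]
    (B : Subalgebra O K) (M : ι → Ideal B) (v : ι → K → ℤ) : Prop where
  isMaximal : ∀ i, (M i).IsMaximal
  injective : Function.Injective M
  map_mul : ∀ i x y, x ≠ 0 → y ≠ 0 → v i (x * y) = v i x + v i y
  min_le_map_add : ∀ i x y, x ≠ 0 → y ≠ 0 → x + y ≠ 0 → min (v i x) (v i y) ≤ v i (x + y)
  exists_map_eq : ∀ (i : ι) (n : ℤ), ∃ x, x ≠ 0 ∧ v i x = n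
  mem_iff : ∀ x, x ≠ 0 → (x ∈ B ↔ ∀ i, 0 ≤ v i x)
  mem_ideal_iff : ∀ (i : ι) (x : K) (hx : x ∈ B), x ≠ 0 → (⟨x, hx⟩ ∈ M i ↔ 1 ≤ v i x)

namespace IsValuationFamily

section

variable {O K ι : Type*} [CommRing O] [Field K] [Algebra O K] {B : Subalgebra O K}
  {M : ι → Ideal B} {v : ι → K → ℤ}

/-- The valuation `v i`, with the value `⊤` at `0`. -/
noncomputable def valuation (h : IsValuationFamily B M v) (i : ι) : AddValuation K (WithTop ℤ) :=
  addValuationOfInt (v i) (h.map_mul i) (h.min_le_map_add i)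

theorem coe_le_valuation_iff (h : IsValuationFamily B M v) {i : ι} {n : ℤ} {x : K} :
    n ≤ h.valuation i x ↔ x = 0 ∨ n ≤ v i x :=
  coe_le_addValuationOfInt_iff

theorem exists_valuation_eq (h : IsValuationFamily B M v) (i : ι) (n : ℤ) :
    ∃ x, h.valuation i x = n := by
  obtain ⟨x, hx, rfl⟩ := h.exists_map_eq i n
  exact ⟨x, addValuationOfInt_of_ne_zero hx⟩

theorem mem_iff_valuation (h : IsValuationFamily B M v) (x : K) :
    x ∈ B ↔ ∀ i, 0 ≤ h.valuation i x := by
  obtain rfl | hx := eq_or_ne x 0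
  · simp
  · exact (h.mem_iff x hx).trans <| forall_congr' fun i => by
      simpa [hx] using (h.coe_le_valuation_iff (i := i) (n := 0) (x := x)).symm

theorem mem_ideal_iff_valuation (h : IsValuationFamily B M v) (i : ι) (x : B) :
    x ∈ M i ↔ 1 ≤ h.valuation i x := by
  obtain rfl | hx := eq_or_ne x 0
  · simp
  · have hxK : (x : K) ≠ 0 := by simpa using hx
    refine (h.mem_ideal_iff i x x.2 hxK).trans ?_
    simpa [hxK] using (h.coe_le_valuation_iff (i := i) (n := 1) (x := x)).symm

/-- The `O`-submodule `J^K(u)` of the elements of `K` whose values are at least `u`. -/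
def valueIdeal (h : IsValuationFamily B M v) (u : ι → ℤ) : Submodule O K where
  carrier := {z | ∀ i, u i ≤ h.valuation i z}
  add_mem' hx hy i := (h.valuation i).map_le_add (hx i) (hy i)
  zero_mem' i := by simp
  smul_mem' s x hx i := by
    rw [Algebra.smul_def, (h.valuation i).map_mul]
    exact le_add_of_nonneg_of_le ((h.mem_iff_valuation _).mp (B.algebraMap_mem s) i) (hx i)

theorem mem_valueIdeal (h : IsValuationFamily B M v) {u : ι → ℤ} {z : K} :
    z ∈ h.valueIdeal u ↔ ∀ i, u i ≤ h.valuation i z :=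
  Iff.rfl

theorem mem_valueIdeal_iff (h : IsValuationFamily B M v) {u : ι → ℤ} {z : K} :
    z ∈ h.valueIdeal u ↔ z = 0 ∨ ∀ i, u i ≤ v i z := by
  simp only [mem_valueIdeal, coe_le_valuation_iff, forall_or_left]

theorem valueIdeal_zero (h : IsValuationFamily B M v) :
    h.valueIdeal 0 = Subalgebra.toSubmodule B := by
  ext z
  simp [mem_valueIdeal, h.mem_iff_valuation]

theorem valueIdeal_antitone (h : IsValuationFamily B M v) : Antitone h.valueIdeal :=
  fun _ _ huw _ hz i => (WithTop.coe_le_coe.mpr (huw i)).trans (hz i)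

theorem mul_mem_valueIdeal_iff (h : IsValuationFamily B M v) {x : K} {u : ι → ℤ}
    (hx : ∀ i, h.valuation i x = u i) {w : ι → ℤ} {z : K} :
    x * z ∈ h.valueIdeal (u + w) ↔ z ∈ h.valueIdeal w := by
  simp [mem_valueIdeal, AddValuation.map_mul, hx]

theorem map_valueIdeal (h : IsValuationFamily B M v) {x : Kˣ} {u : ι → ℤ}
    (hx : ∀ i, h.valuation i x = u i) (w : ι → ℤ) :
    (h.valueIdeal w).map (DistribMulAction.toLinearEquiv O K x : K →ₗ[O] K) =
      h.valueIdeal (u + w) := by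
  ext z
  constructor
  · rintro ⟨y, hy, rfl⟩
    exact (h.mul_mem_valueIdeal_iff hx).mpr hy
  · refine fun hz => ⟨x⁻¹ * z, (h.mul_mem_valueIdeal_iff hx).mp ?_, ?_⟩
    · simpa using hz
    · simp [Units.smul_def]

theorem toSubmodule_mul_valueIdeal (h : IsValuationFamily B M v) (u : ι → ℤ) :
    Subalgebra.toSubmodule B * h.valueIdeal u = h.valueIdeal u := by
  refine le_antisymm (Submodule.mul_le.mpr fun s hs z hz i => ?_) fun z hz => ?_
  · rw [(h.valuation i).map_mul]
    exact le_add_of_nonneg_of_le ((h.mem_iff_valuation s).mp hs i) (hz i)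
  · rw [← one_mul z]
    exact Submodule.mul_mem_mul B.one_mem hz

variable [Finite ι]

theorem exists_valuation_eq_zero_and_one_le (h : IsValuationFamily B M v) (i : ι) :
    ∃ e : K, h.valuation i e = 0 ∧ ∀ j ≠ i, 1 ≤ h.valuation j e := by
  classical
  obtain ⟨e, he⟩ := Ideal.exists_forall_sub_mem_ideal (I := M)
    (fun j l hjl => Ideal.isCoprime_iff_sup_eq.mpr <|
      (h.isMaximal j).coprime_of_ne (h.isMaximal l) (h.injective.ne hjl)) (Pi.single i 1)
  refine ⟨e, ?_, fun j hj => (h.mem_ideal_iff_valuation j e).mp ?_⟩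
  · have he_notMem : e ∉ M i := fun hei => (h.isMaximal i).ne_top <|
      (Ideal.eq_top_iff_one _).mpr <| by
        simpa using (M i).sub_mem hei (he i)
    have hnonneg : 0 ≤ h.valuation i e := (h.mem_iff_valuation e).mp e.2 i
    have hlt : h.valuation i e < 1 := not_le.mp fun hle =>
      he_notMem ((h.mem_ideal_iff_valuation i e).mpr hle)
    lift h.valuation i e to ℤ using hlt.ne_top with n
    norm_cast at hnonneg hlt ⊢
    lia
  · simpa [hj] using he j

theorem exists_valuation_eq_and_lt (h : IsValuationFamily B M v) (u : ι → ℤ) (i : ι) :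
    ∃ x : K, h.valuation i x = u i ∧ ∀ j ≠ i, u j < h.valuation j x := by
  obtain ⟨e, he, he_ne⟩ := h.exists_valuation_eq_zero_and_one_le i
  obtain ⟨y, hy⟩ := h.exists_valuation_eq i (u i)
  have hy0 : y ≠ 0 := (h.valuation i).ne_top_iff.mp (hy ▸ WithTop.coe_ne_top)
  choose a ha using fun j => WithTop.ne_top_iff_exists.mp ((h.valuation j).ne_top_iff.mpr hy0)
  obtain ⟨N, hN⟩ := Finite.exists_le fun j => (u j - a j + 1).toNat
  refine ⟨e ^ N * y, by simp [AddValuation.map_mul, AddValuation.map_pow, he, hy], fun j hj => ?_⟩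
  have hpow : ((N : ℤ) : WithTop ℤ) ≤ h.valuation j (e ^ N) := by
    simpa [AddValuation.map_pow] using nsmul_le_nsmul_right (he_ne j hj) N
  have hlt : u j < N + a j := by
    have := hN j
    lia
  calc (u j : WithTop ℤ) < (N + a j : ℤ) := WithTop.coe_lt_coe.mpr hlt
    _ = (N : ℤ) + h.valuation j y := by rw [← ha]; rfl
    _ ≤ h.valuation j (e ^ N * y) := by rw [(h.valuation j).map_mul]; gcongr

theorem exists_unit_valuation_eq (h : IsValuationFamily B M v) (u : ι → ℤ) :
    ∃ x : Kˣ, ∀ i, h.valuation i x = u i := by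
  classical
  cases nonempty_fintype ι
  obtain hι | ⟨⟨i₀⟩⟩ := isEmpty_or_nonempty ι
  · exact ⟨1, isEmptyElim⟩
  choose x hx_self hx_ne using h.exists_valuation_eq_and_lt u
  have hsum (i : ι) : h.valuation i (∑ j, x j) = u i := by
    rw [← Finset.add_sum_erase _ _ (Finset.mem_univ i),
      (h.valuation i).map_add_eq_of_lt_left, hx_self]
    rw [hx_self]
    exact (h.valuation i).map_lt_sum WithTop.coe_ne_top fun j hj =>
      hx_ne j i (Finset.ne_of_mem_erase hj).symm
  have hne : ∑ j, x j ≠ 0 := (h.valuation i₀).ne_top_iff.mp (hsum i₀ ▸ WithTop.coe_ne_top)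
  exact ⟨Units.mk0 _ hne, hsum⟩

theorem valueIdeal_div_valueIdeal (h : IsValuationFamily B M v) (u w : ι → ℤ) :
    h.valueIdeal w / h.valueIdeal u = h.valueIdeal (w - u) := by
  obtain ⟨x, hx⟩ := h.exists_unit_valuation_eq u
  ext z
  rw [Submodule.mem_div_iff_forall_mul_mem]
  refine ⟨fun hz => (h.mul_mem_valueIdeal_iff hx).mp ?_, fun hz y hy i => ?_⟩
  · rw [add_sub_cancel, mul_comm]
    exact hz x fun i => (hx i).ge
  · have := add_le_add (hz i) (hy i)
    rw [(h.valuation i).map_mul]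
    exact le_trans (by norm_cast; simp) this

theorem div_valueIdeal (h : IsValuationFamily B M v) {c : Submodule O K} {γ : ι → ℤ}
    (hcB : c / Subalgebra.toSubmodule B = h.valueIdeal γ) (u : ι → ℤ) :
    c / h.valueIdeal u = h.valueIdeal (γ - u) := by
  rw [← h.toSubmodule_mul_valueIdeal, submodule_div_mul, hcB, h.valueIdeal_div_valueIdeal]

end

section Degree

variable {k O K ι : Type} [Field k] [CommRing O] [Field K] [Algebra O K]
  {B : Subalgebra O K} {M : ι → Ideal B} {v : ι → K → ℤ}

theorem isFracIdeal_valueIdeal [Finite ι] [IsFractionRing O K] [Module.Finite O B]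
    (h : IsValuationFamily B M v) (u : ι → ℤ) : IsFracIdeal (h.valueIdeal u) := by
  obtain ⟨x, hx⟩ := h.exists_unit_valuation_eq u
  refine .of_fg (Submodule.ne_bot_iff _ |>.mpr ⟨x, fun i => (hx i).ge, x.ne_zero⟩) ?_
  rw [← add_zero u, ← h.map_valueIdeal hx, valueIdeal_zero]
  exact (Module.Finite.iff_fg.mp ‹_›).map _

theorem isFracIdeal_toSubmodule [Finite ι] [IsFractionRing O K] [Module.Finite O B]
    (h : IsValuationFamily B M v) : IsFracIdeal (Subalgebra.toSubmodule B) :=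
  h.valueIdeal_zero ▸ h.isFracIdeal_valueIdeal 0

variable [Algebra k O] [Algebra k K] [IsScalarTower k O K] [DecidableEq ι]

theorem mem_ideal_iff_coe_mem_valueIdeal (h : IsValuationFamily B M v) (i : ι) (z : B) :
    z ∈ M i ↔ (z : K) ∈ h.valueIdeal (Pi.single i 1) := by
  rw [h.mem_ideal_iff_valuation, mem_valueIdeal]
  refine ⟨fun hz j => ?_, fun hz => by simpa using hz i⟩
  obtain rfl | hj := eq_or_ne j i
  · simpa using hz
  · simpa [hj] using (h.mem_iff_valuation z).mp z.2 j

theorem qdim_toSubmodule_valueIdeal_single (h : IsValuationFamily B M v) (i : ι) :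
    qdim k (Subalgebra.toSubmodule B) (h.valueIdeal (Pi.single i 1)) =
      Module.finrank k (B ⧸ M i) := by
  have hcomap : (h.valueIdeal (Pi.single i 1)).comap (Subalgebra.toSubmodule B).subtype =
      (M i).restrictScalars O :=
    Submodule.ext fun z => (h.mem_ideal_iff_coe_mem_valueIdeal i z).symm
  exact ((Submodule.quotEquivOfEq _ _ hcomap).restrictScalars k).finrank_eq

theorem qdim_valueIdeal_add_single [Finite ι] (h : IsValuationFamily B M v) (u : ι → ℤ) (i : ι) :
    qdim k (h.valueIdeal u) (h.valueIdeal (u + Pi.single i 1)) = Module.finrank k (B ⧸ M i) := by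
  obtain ⟨x, hx⟩ := h.exists_unit_valuation_eq u
  rw [← h.qdim_toSubmodule_valueIdeal_single, ← h.valueIdeal_zero,
    ← qdim_map_equiv k (DistribMulAction.toLinearEquiv O K x) (h.valueIdeal 0),
    h.map_valueIdeal hx, h.map_valueIdeal hx, add_zero]

end Degree

end IsValuationFamily

theorem periodic_of_periodic_single {ι α : Type*} [Finite ι] [DecidableEq ι] {f : (ι → ℤ) → α}
    (hf : ∀ i, Function.Periodic f (Pi.single i 1)) (u : ι → ℤ) : Function.Periodic f u := by
  cases nonempty_fintype ι
  rw [← Finset.univ_sum_single u]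
  refine Finset.sum_induction _ (Function.Periodic f) (fun _ _ => Function.Periodic.add_period)
    (by simp [Function.Periodic]) fun i _ => ?_
  simpa [← Pi.single_smul] using (hf i).zsmul (u i)

section

variable {k O K ι : Type} [Field k] [CommRing O] [Algebra k O] [Field K]
  [Algebra O K] [IsFractionRing O K] [Algebra k K] [IsScalarTower k O K] [Fintype ι]
  {B : Subalgebra O K} [Module.Finite O B] {M : ι → Ideal B}
  {v : ι → K → ℤ} {deg : Submodule O K → ℤ}

theorem IsDegree.apply_valueIdeal (hdeg : IsDegree k deg) (h : IsValuationFamily B M v)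
    (u : ι → ℤ) :
    deg (h.valueIdeal u) =
      deg (Subalgebra.toSubmodule B) - ∑ i, (Module.finrank k (B ⧸ M i) : ℤ) * u i := by
  classical
  have hperiodic (i : ι) : Function.Periodic
      (fun u => deg (h.valueIdeal u) + ∑ i, (Module.finrank k (B ⧸ M i) : ℤ) * u i)
      (Pi.single i 1) := fun u => by
    have hstep := hdeg _ _ (h.isFracIdeal_valueIdeal u)
      (h.isFracIdeal_valueIdeal (u + Pi.single i 1)) (h.valueIdeal_antitone (by simp))
    rw [h.qdim_valueIdeal_add_single] at hstep
    simp only [Pi.add_apply, mul_add, Finset.sum_add_distrib, Pi.single_apply, mul_ite, mul_one,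
      mul_zero, Finset.sum_ite_eq', Finset.mem_univ, if_true]
    linarith
  have hconst := periodic_of_periodic_single hperiodic u 0
  simp only [zero_add, h.valueIdeal_zero, Pi.zero_apply, mul_zero, Finset.sum_const_zero,
    add_zero] at hconst
  linarith

theorem IsDegree.div_inf_valueIdeal [IsDomain O] [IsLocalRing O] (hdeg : IsDegree k deg)
    (h : IsValuationFamily B M v) {b c : Submodule O K} (hb : IsFracIdeal b)
    (hc : IsCanonicalIdeal c) {γ : ι → ℤ}
    (hcB : c / Subalgebra.toSubmodule B = h.valueIdeal γ) (w : ι → ℤ) :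
    deg (c / b ⊓ h.valueIdeal w) =
      deg (b ⊓ h.valueIdeal (γ - w)) + (deg (Subalgebra.toSubmodule B) - deg b) -
        ∑ i, (Module.finrank k (B ⧸ M i) : ℤ) * w i := by
  have hT := h.isFracIdeal_valueIdeal (γ - w)
  have hdual : c / b ⊓ h.valueIdeal w = c / (b ⊔ h.valueIdeal (γ - w)) := by
    rw [submodule_div_sup, h.div_valueIdeal hcB, sub_sub_cancel]
  have hduality := hdeg.div_add hc (hb.sup hT) h.isFracIdeal_toSubmodule
  have hsup_inf := hdeg.sup_add_inf hb hT
  rw [hcB, hdeg.apply_valueIdeal h γ] at hduality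
  rw [hdeg.apply_valueIdeal h (γ - w)] at hsup_inf
  simp only [Pi.sub_apply, mul_sub, Finset.sum_sub_distrib] at hsup_inf
  rw [hdual]
  linarith

theorem statement_17_general [IsDomain O] [IsLocalRing O] (hdeg : IsDegree k deg)
    (h : IsValuationFamily B M v) {J : Submodule O K → (ι → ℤ) → Submodule O K}
    (hJ : ∀ a u z, z ∈ J a u ↔ z ∈ a ∧ (z = 0 ∨ ∀ i, u i ≤ v i z)) {b c : Submodule O K}
    (hb : IsFracIdeal b) (hbB : b ≤ Subalgebra.toSubmodule B) (hc : IsCanonicalIdeal c)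
    {γ : ι → ℤ} (hcB : c / Subalgebra.toSubmodule B = J ⊤ γ) (w : ι → ℤ) :
    deg (J (c / b) w) = deg (J b (γ - w)) + (qdim k (Subalgebra.toSubmodule B) b : ℤ) -
      ∑ i, (Module.finrank k (B ⧸ M i) : ℤ) * w i := by
  have hJ_eq_inf (a : Submodule O K) (u : ι → ℤ) : J a u = a ⊓ h.valueIdeal u :=
    Submodule.ext fun z => by rw [hJ, Submodule.mem_inf, h.mem_valueIdeal_iff]
  rw [hJ_eq_inf, top_inf_eq] at hcB
  rw [hJ_eq_inf, hJ_eq_inf, ← hdeg _ b h.isFracIdeal_toSubmodule hb hbB]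
  exact hdeg.div_inf_valueIdeal h hb hc hcB w

end

theorem statement_17 (k O K : Type) [Field k] [PerfectField k]
    [CommRing O] [IsDomain O] [IsNoetherianRing O] [IsLocalRing O] [Algebra k O]
    [Field K] [Algebra O K] [IsFractionRing O K] [Algebra k K] [IsScalarTower k O K]
    (hdim : ringKrullDim O = 1)
    (hfin : Module.Finite O (integralClosure O K))
    (OB : Submodule O K) (hOB : OB = Subalgebra.toSubmodule (integralClosure O K))
    (r : ℕ) (M : Fin r → Ideal (integralClosure O K))
    (hMmax : ∀ i, (M i).IsMaximal)
    (hMinj : Function.Injective M)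
    (hMall : ∀ P : Ideal (integralClosure O K), P.IsMaximal → ∃ i, P = M i)
    (v : Fin r → K → ℤ)
    (hvmul : ∀ (i : Fin r) (x y : K), x ≠ 0 → y ≠ 0 → v i (x * y) = v i x + v i y)
    (hvadd : ∀ (i : Fin r) (x y : K), x ≠ 0 → y ≠ 0 → x + y ≠ 0 →
      min (v i x) (v i y) ≤ v i (x + y))
    (hvsurj : ∀ (i : Fin r) (n : ℤ), ∃ x : K, x ≠ 0 ∧ v i x = n)
    (hvint : ∀ x : K, x ≠ 0 → (x ∈ integralClosure O K ↔ ∀ i, 0 ≤ v i x))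
    (hvmax : ∀ (i : Fin r) (x : K) (hx : x ∈ integralClosure O K), x ≠ 0 →
      ((⟨x, hx⟩ : integralClosure O K) ∈ M i ↔ 1 ≤ v i x))
    (d : Fin r → ℕ) (hd : ∀ i, d i = Module.finrank k ((integralClosure O K) ⧸ M i))
    (J : Submodule O K → (Fin r → ℤ) → Submodule O K)
    (hJ : ∀ (a : Submodule O K) (w : Fin r → ℤ) (z : K),
      z ∈ J a w ↔ z ∈ a ∧ (z = 0 ∨ ∀ i, w i ≤ v i z))
    (deg : Submodule O K → ℤ)
    (hdeg0 : deg 1 = 0)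
    (hdegd : ∀ a b : Submodule O K, IsFracIdeal a → IsFracIdeal b → b ≤ a →
      deg a - deg b = qdim k a b)
    (b : Submodule O K) (hb : IsFracIdeal b) (hbO : b * OB = OB)
    (γb : Fin r → ℤ) (hγb : γb = gammaB v OB b)
    (c : Submodule O K) (hc : IsCanonicalIdeal c) (hcO : c / OB = J (⊤ : Submodule O K) γb) :
    ∀ w : Fin r → ℤ,
      deg (J (c / b) w) = deg (J b (γb - w)) + (qdim k OB b : ℤ) - ∑ i, (d i : ℤ) * w i := by
  subst hOB
  simpa only [hd] using statement_17_general hdegd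
    ⟨hMmax, hMinj, hvmul, hvadd, hvsurj, hvint, hvmax⟩ hJ hb
    ((le_mul_of_one_le_right' (Submodule.one_le.mpr (Subalgebra.one_mem _))).trans_eq hbO) hc hcO
end
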